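/- arXiv:2605.05346 — 2 statements merged into one kernel-verified Lean document; each statement's English description precedes it below -/
import Mathlib

section
/- Every K_4-free graph G on n vertices can be made bipartite by removing at most n^2/9 edges; that is, there exists a partition of the vertex set of G into two (not necessarily balanced) parts such that the number of edges of G with both endpoints in the same part is at most n^2/9. -/
/-!
Induction on the number `n` of vertices. Suppose that every cut leaves more than `n² / 9` edges
inside its parts. Random cuts show that `G` has many edges. The cuts between the neighbourhood of a
vertex and the rest leave few edges on average unless `G` has many triangles. But then, by
Cauchy-Schwarz, there is a triangle `xyz` for which many vertices are adjacent to two of `x`, `y`,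
`z`. As `G` is `K₄`-free, no vertex is adjacent to all three and the common neighbours of each edge
of `xyz` are independent, so these vertices split into three independent sets, leaving a small set
`R`. Cutting off one independent set together with all of `R` is good when `R` spans few edges.
Cutting it off together with one side of an optimal cut of `G[R]`, to which the induction
hypothesis applies, is good when `R` spans many. Averaged over the three independent sets, one of
these bounds beats `n² / 9`, because Turán's theorem limits the edges of `G` and `G[R]`.
-/

open Finset SimpleGraph

namespace BipartiteDistance

section FinsetCounting

variable {α : Type*} [Fintype α] [DecidableEq α]

lemma card_filter_mem_iff_mem (A B : Finset α) :
    #{a | a ∈ A ↔ a ∈ B} + #A + #B = Fintype.card α + 2 * #(A ∩ B) := by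
  have same_side : ({a | a ∈ A ↔ a ∈ B} : Finset α) = (A ∪ B)ᶜ ∪ A ∩ B := by
    ext; grind [mem_compl]
  have disjoint_sides : Disjoint (A ∪ B)ᶜ (A ∩ B) :=
    disjoint_compl_left.mono_right (inter_subset_left.trans subset_union_left)
  have := card_add_card_compl (A ∪ B)
  have := card_union_add_card_inter A B
  grind [card_union_of_disjoint]

lemma two_mul_card_filter_mem_iff_mem {x y : α} (hxy : x ≠ y) :
    2 * #{S : Finset α | x ∈ S ↔ y ∈ S} = Fintype.card (Finset α) := by
  have same_eq_different :
      #{S : Finset α | x ∈ S ↔ y ∈ S} = #{S : Finset α | ¬(x ∈ S ↔ y ∈ S)} :=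
    card_bij' (fun S _ ↦ symmDiff S {x}) (fun S _ ↦ symmDiff S {x})
      (by grind [mem_symmDiff]) (by grind [mem_symmDiff]) (by simp) (by simp)
  rw [two_mul, ← card_univ]
  nth_rw 2 [same_eq_different]
  exact card_filter_add_card_filter_not _

end FinsetCounting

section Darts

variable {V : Type*} [Fintype V] {G : SimpleGraph V} [DecidableRel G.Adj]

section Sums

variable {M : Type*} [AddCommMonoid M] (f : V → M)

lemma sum_dart_fst : ∑ d : G.Dart, f d.fst = ∑ v, G.degree v • f v := by
  classical
  rw [← sum_fiberwise univ (fun d : G.Dart ↦ d.fst)]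
  refine sum_congr rfl fun v _ ↦ ?_
  rw [sum_congr rfl fun d hd ↦ congrArg f (mem_filter.1 hd).2, sum_const,
    ← G.dart_fst_fiber_card_eq_degree v]

lemma sum_dart_snd : ∑ d : G.Dart, f d.snd = ∑ v, G.degree v • f v := by
  rw [← sum_dart_fst]
  exact (Equiv.sum_comp Dart.symm_involutive.toPerm fun d : G.Dart ↦ f d.fst)

end Sums

lemma sq_card_dart_le_card_mul_sum_sq_degree :
    Fintype.card G.Dart ^ 2 ≤ Fintype.card V * ∑ v, G.degree v ^ 2 := by
  rw [G.dart_card_eq_sum_degrees]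
  exact sq_sum_le_card_mul_sum_sq

lemma mul_card_dart_le_of_cliqueFree {r : ℕ} (hG : G.CliqueFree (r + 1)) :
    r * Fintype.card G.Dart ≤ (r - 1) * Fintype.card V ^ 2 := by
  calc r * Fintype.card G.Dart = 2 * r * #G.edgeFinset := by
        rw [G.dart_card_eq_twice_card_edges]; ring
    _ ≤ 2 * r * #(turanGraph (Fintype.card V) r).edgeFinset := by
        gcongr
        exact hG.card_edgeFinset_le.trans_eq card_edgeFinset_turanGraph.symm
    _ ≤ (r - 1) * Fintype.card V ^ 2 := mul_card_edgeFinset_turanGraph_le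

lemma card_filter_dart_induce [DecidableEq V] (R : Finset V) (p : V → V → Prop)
    [DecidableRel p] :
    #{d : (G.induce (R : Set V)).Dart | p d.fst d.snd} =
      #{d : G.Dart | (d.fst ∈ R ∧ d.snd ∈ R) ∧ p d.fst d.snd} :=
  card_bij' (fun d _ ↦ ⟨(d.fst, d.snd), d.adj⟩)
    (fun d hd ↦ ⟨(⟨d.fst, (mem_filter.1 hd).2.1.1⟩, ⟨d.snd, (mem_filter.1 hd).2.1.2⟩), d.adj⟩)
    (by simp) (by simp +contextual) (by simp) (by simp)

lemma card_dart_induce [DecidableEq V] (R : Finset V) :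
    Fintype.card (G.induce (R : Set V)).Dart = #{d : G.Dart | d.fst ∈ R ∧ d.snd ∈ R} := by
  simpa using card_filter_dart_induce (G := G) R fun _ _ ↦ True

end Darts

section Triangles

variable {V : Type*} [Fintype V] {G : SimpleGraph V} [DecidableRel G.Adj]

variable (G) in
/-- The triangles of `G` with an ordering of their vertices, so six for each triangle. -/
def orderedTriangles : Finset (V × V × V) :=
  {t | G.Adj t.1 t.2.1 ∧ G.Adj t.2.1 t.2.2 ∧ G.Adj t.2.2 t.1}

lemma sum_orderedTriangles_rotate {M : Type*} [AddCommMonoid M] (F : V → V → V → M) :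
    ∑ t ∈ orderedTriangles G, F t.2.1 t.2.2 t.1 = ∑ t ∈ orderedTriangles G, F t.1 t.2.1 t.2.2 :=
  sum_bij' (fun t _ ↦ (t.2.1, t.2.2, t.1)) (fun t _ ↦ (t.2.2, t.1, t.2.1))
    (by simp +contextual [orderedTriangles]) (by simp +contextual [orderedTriangles])
    (by simp) (by simp) (by simp)

variable [DecidableEq V]

variable (G) in
/-- The codegree of two vertices: the number of their common neighbours. -/
def codegree (x y : V) : ℕ := #(G.neighborFinset x ∩ G.neighborFinset y)

lemma sum_orderedTriangles {M : Type*} [AddCommMonoid M] (f : V → V → M) :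
    ∑ t ∈ orderedTriangles G, f t.1 t.2.1 =
      ∑ d : G.Dart, codegree G d.fst d.snd • f d.fst d.snd := by
  simp only [codegree, ← sum_const]
  rw [sum_sigma']
  symm
  refine sum_bij' (fun p _ ↦ (p.1.fst, p.1.snd, p.2))
    (fun t ht ↦ ⟨⟨(t.1, t.2.1), (mem_filter.1 ht).2.1⟩, t.2.2⟩) ?_ ?_ ?_ ?_ ?_ <;>
    simp +contextual [orderedTriangles, adj_comm, Dart.adj]

lemma card_orderedTriangles :
    #(orderedTriangles G) = ∑ d : G.Dart, codegree G d.fst d.snd := by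
  simpa using sum_orderedTriangles (G := G) fun _ _ ↦ (1 : ℕ)

-- Averaging over triangles counts each dart once for every common neighbour of its endpoints, so
-- the sum of the codegrees becomes the sum of their squares.
lemma exists_orderedTriangle_codegree_ge (h : (orderedTriangles G).Nonempty) :
    ∃ t ∈ orderedTriangles G, 3 * #(orderedTriangles G) ≤
      Fintype.card G.Dart *
        (codegree G t.1 t.2.1 + codegree G t.2.1 t.2.2 + codegree G t.2.2 t.1) := by
  have edge_sum : ∑ t ∈ orderedTriangles G,
      (codegree G t.1 t.2.1 + codegree G t.2.1 t.2.2 + codegree G t.2.2 t.1) =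
        3 * ∑ d : G.Dart, codegree G d.fst d.snd ^ 2 := by
    have second_edge := sum_orderedTriangles_rotate (G := G) fun x y _ ↦ codegree G x y
    have third_edge := sum_orderedTriangles_rotate (G := G) fun _ y z ↦ codegree G y z
    have first_edge := sum_orderedTriangles (G := G) (codegree G)
    simp only [smul_eq_mul, ← sq] at first_edge
    rw [sum_add_distrib, sum_add_distrib, third_edge, second_edge, first_edge]
    ring
  have cauchy_schwarz : #(orderedTriangles G) ^ 2 ≤
      Fintype.card G.Dart * ∑ d : G.Dart, codegree G d.fst d.snd ^ 2 := by
    rw [card_orderedTriangles]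
    exact sq_sum_le_card_mul_sum_sq
  refine exists_le_of_sum_le h ?_
  rw [sum_const, smul_eq_mul, ← mul_sum, edge_sum]
  linarith

end Triangles

section MonoDarts

variable {V : Type*} [Fintype V] [DecidableEq V] (G : SimpleGraph V) [DecidableRel G.Adj]

/-- The darts of `G` with both endpoints on the same side of the cut `(S, Sᶜ)`. Counting darts
means that each monochromatic edge is counted twice. -/
def monoDarts (S : Finset V) : Finset G.Dart := {d | d.fst ∈ S ↔ d.snd ∈ S}

/-- Twice the bipartite distance of `G`: the least number of monochromatic darts of a cut. -/
noncomputable def minMonoDarts : ℕ := ⨅ S, #(monoDarts G S)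

lemma minMonoDarts_le (S : Finset V) : minMonoDarts G ≤ #(monoDarts G S) :=
  ciInf_le' _ S

lemma exists_card_monoDarts_eq : ∃ S, #(monoDarts G S) = minMonoDarts G :=
  exists_eq_ciInf_of_finite

lemma card_monoDarts_eq_two_mul (S : Finset V) :
    #(monoDarts G S) =
      2 * #{e ∈ G.edgeFinset | (∀ v ∈ e, v ∈ S) ∨ ∀ v ∈ e, v ∉ S} := by
  have edge_mem_iff (d : G.Dart) :
      ((∀ v ∈ d.edge, v ∈ S) ∨ ∀ v ∈ d.edge, v ∉ S) ↔ d ∈ monoDarts G S := by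
    simp only [monoDarts, mem_filter_univ, Dart.edge, Sym2.mem_iff, forall_eq_or_imp, forall_eq]
    tauto
  rw [card_eq_sum_card_fiberwise (f := Dart.edge) fun d hd ↦
    (mem_filter (p := fun e ↦ (∀ v ∈ e, v ∈ S) ∨ ∀ v ∈ e, v ∉ S)).2
      ⟨mem_edgeFinset.2 d.edge_mem, (edge_mem_iff d).2 hd⟩, mul_comm]
  refine sum_const_nat fun e he ↦ ?_
  rw [mem_filter, mem_edgeFinset] at he
  rw [← G.dart_edge_fiber_card e he.1]
  congr 1
  ext d
  grind

end MonoDarts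

section AverageCuts

variable {V : Type*} [Fintype V] [DecidableEq V] {G : SimpleGraph V} [DecidableRel G.Adj]

lemma two_mul_minMonoDarts_le_card_dart : 2 * minMonoDarts G ≤ Fintype.card G.Dart := by
  have average : ∑ S, 2 * #(monoDarts G S) = Fintype.card (Finset V) * Fintype.card G.Dart :=
    calc ∑ S, 2 * #(monoDarts G S)
        = ∑ d : G.Dart, 2 * #{S : Finset V | d.fst ∈ S ↔ d.snd ∈ S} := by
          simp only [monoDarts, card_filter, ← mul_sum]
          rw [sum_comm]
      _ = Fintype.card (Finset V) * Fintype.card G.Dart := by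
          simp only [two_mul_card_filter_mem_iff_mem (Dart.fst_ne_snd _), sum_const, card_univ,
            smul_eq_mul, mul_comm]
  refine le_of_mul_le_mul_left ?_ (Fintype.card_pos (α := Finset V))
  rw [← average, ← card_univ, ← smul_eq_mul]
  exact card_nsmul_le_sum _ _ _ fun S _ ↦ Nat.mul_le_mul_left 2 (minMonoDarts_le G S)

lemma sum_card_monoDarts_neighborFinset :
    ∑ v, #(monoDarts G (G.neighborFinset v)) + 2 * ∑ v, G.degree v ^ 2 =
      Fintype.card V * Fintype.card G.Dart + 2 * #(orderedTriangles G) := by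
  have double_count : ∑ v, #(monoDarts G (G.neighborFinset v)) =
      ∑ d : G.Dart, #{v | v ∈ G.neighborFinset d.fst ↔ v ∈ G.neighborFinset d.snd} := by
    simp only [monoDarts, card_filter, mem_neighborFinset, G.adj_comm]
    exact sum_comm
  have sum_degrees : 2 * ∑ v, G.degree v ^ 2 =
      ∑ d : G.Dart, (G.degree d.fst + G.degree d.snd) := by
    rw [sum_add_distrib, sum_dart_fst (f := fun v ↦ G.degree v),
      sum_dart_snd (f := fun v ↦ G.degree v), two_mul]
    simp only [sq, smul_eq_mul]
  rw [double_count, sum_degrees, ← sum_add_distrib, card_orderedTriangles, mul_sum]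
  simp only [← card_neighborFinset_eq_degree, ← add_assoc, card_filter_mem_iff_mem]
  simp [sum_add_distrib, codegree, mul_comm]

lemma card_mul_minMonoDarts_add_le :
    Fintype.card V * minMonoDarts G + 2 * ∑ v, G.degree v ^ 2 ≤
      Fintype.card V * Fintype.card G.Dart + 2 * #(orderedTriangles G) := by
  rw [← sum_card_monoDarts_neighborFinset, ← card_univ, ← smul_eq_mul]
  gcongr
  exact card_nsmul_le_sum _ _ _ fun v _ ↦ minMonoDarts_le G _

lemma sq_card_mul_minMonoDarts_add_le :
    Fintype.card V ^ 2 * minMonoDarts G + 2 * Fintype.card G.Dart ^ 2 ≤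
      Fintype.card V ^ 2 * Fintype.card G.Dart +
        2 * Fintype.card V * #(orderedTriangles G) := by
  have neighborhoods := Nat.mul_le_mul_left (Fintype.card V) (card_mul_minMonoDarts_add_le (G := G))
  have cauchy_schwarz := sq_card_dart_le_card_mul_sum_sq_degree (G := G)
  linarith

lemma eight_mul_minMonoDarts_le (h : orderedTriangles G = ∅) :
    8 * minMonoDarts G ≤ Fintype.card V ^ 2 := by
  have neighborhoods := sq_card_mul_minMonoDarts_add_le (G := G)
  rw [h, card_empty, mul_zero, add_zero] at neighborhoods
  rcases isEmpty_or_nonempty V with hV | hV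
  · have := two_mul_minMonoDarts_le_card_dart (G := G)
    have := sq_card_dart_le_card_mul_sum_sq_degree (G := G)
    simp_all
  · have : 0 < Fintype.card V := Fintype.card_pos
    zify at *
    nlinarith [sq_nonneg ((Fintype.card V : ℤ) ^ 2 - 4 * Fintype.card G.Dart)]

end AverageCuts

section PartialColoring

variable {V : Type*} [Fintype V] [DecidableEq V] {G : SimpleGraph V} {α : Type*}

variable (G) in
/-- A proper colouring of part of the vertices of `G`, where `none` marks the others. -/
def IsPartialColoring (c : V → Option α) : Prop :=
  ∀ ⦃x y⦄, G.Adj x y → c x = c y → c x = none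

/-- The vertices that `c` leaves uncoloured. -/
def uncolored (c : V → Option α) : Finset V := {v | c v = none}

variable [DecidableEq α] in
/-- The side of a cut that consists of the colour class `i` and the uncoloured vertices in `P`. -/
def colorCut (c : V → Option α) (P : Finset V) (i : α) : Finset V :=
  {v | c v = some i ∨ c v = none ∧ v ∈ P}

variable [DecidableRel G.Adj]

lemma IsPartialColoring.sum_card_monoDarts_colorCut_univ {c : V → Option (Fin 3)}
    (hc : IsPartialColoring G c) :
    ∑ i, #(monoDarts G (colorCut c univ i)) =
      Fintype.card G.Dart + 2 * Fintype.card (G.induce (uncolored c : Set V)).Dart := by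
  have count_sides : ∀ a b : Option (Fin 3), (a = b → a = none) →
      ∑ i, (if (a = some i ∨ a = none) ↔ (b = some i ∨ b = none) then 1 else 0) =
        1 + 2 * if a = none ∧ b = none then 1 else 0 := by decide
  rw [card_dart_induce, ← card_univ, card_eq_sum_ones (univ : Finset G.Dart)]
  simp only [card_filter, monoDarts, colorCut, uncolored, mem_filter_univ, mem_univ, and_true]
  rw [sum_comm, mul_sum, ← sum_add_distrib]
  exact sum_congr rfl fun d _ ↦ count_sides _ _ (hc d.adj)

lemma IsPartialColoring.sum_card_monoDarts_colorCut_le {c : V → Option (Fin 3)}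
    (hc : IsPartialColoring G c) (P : Finset V) :
    ∑ i, (#(monoDarts G (colorCut c P i)) + #(monoDarts G (colorCut c Pᶜ i))) +
        3 * Fintype.card (G.induce (uncolored c : Set V)).Dart ≤
      3 * Fintype.card G.Dart +
        6 * #{d : G.Dart | (d.fst ∈ uncolored c ∧ d.snd ∈ uncolored c) ∧
          (d.fst ∈ P ↔ d.snd ∈ P)} := by
  have count_sides : ∀ p q : Bool, ∀ a b : Option (Fin 3), (a = b → a = none) →
      ∑ i, ((if (a = some i ∨ a = none ∧ p) ↔ (b = some i ∨ b = none ∧ q) then 1 else 0) +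
          if (a = some i ∨ a = none ∧ ¬p) ↔ (b = some i ∨ b = none ∧ ¬q) then 1 else 0) +
          3 * (if a = none ∧ b = none then 1 else 0) ≤
        3 + 6 * if (a = none ∧ b = none) ∧ (p ↔ q) then 1 else 0 := by decide
  rw [card_dart_induce, ← card_univ, card_eq_sum_ones (univ : Finset G.Dart)]
  simp only [card_filter, monoDarts, colorCut, uncolored, mem_filter_univ, mem_compl,
    ← sum_add_distrib, mul_sum]
  rw [sum_comm, ← sum_add_distrib]
  refine sum_le_sum fun d _ ↦ ?_
  simpa using count_sides (d.fst ∈ P) (d.snd ∈ P) _ _ (hc d.adj)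

lemma IsPartialColoring.three_mul_minMonoDarts_le {c : V → Option (Fin 3)}
    (hc : IsPartialColoring G c) :
    3 * minMonoDarts G ≤
      Fintype.card G.Dart + 2 * Fintype.card (G.induce (uncolored c : Set V)).Dart := by
  rw [← hc.sum_card_monoDarts_colorCut_univ]
  simpa using card_nsmul_le_sum univ _ _ fun i _ ↦ minMonoDarts_le G (colorCut c univ i)

lemma IsPartialColoring.six_mul_minMonoDarts_le {c : V → Option (Fin 3)}
    (hc : IsPartialColoring G c) :
    6 * minMonoDarts G + 3 * Fintype.card (G.induce (uncolored c : Set V)).Dart ≤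
      3 * Fintype.card G.Dart + 6 * minMonoDarts (G.induce (uncolored c : Set V)) := by
  obtain ⟨S, hS⟩ := exists_card_monoDarts_eq (G.induce (uncolored c : Set V))
  let P : Finset V := S.map (.subtype _)
  have monoDarts_within : #(monoDarts (G.induce (uncolored c : Set V)) S) =
      #{d : G.Dart | (d.fst ∈ uncolored c ∧ d.snd ∈ uncolored c) ∧
        (d.fst ∈ P ↔ d.snd ∈ P)} := by
    rw [← card_filter_dart_induce _ fun x y ↦ (x ∈ P ↔ y ∈ P)]
    simp [monoDarts, P]
  have six_cuts : 6 * minMonoDarts G ≤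
      ∑ i, (#(monoDarts G (colorCut c P i)) + #(monoDarts G (colorCut c Pᶜ i))) := by
    simpa [← two_mul, ← mul_assoc] using card_nsmul_le_sum univ _ _ fun i _ ↦
      Nat.add_le_add (minMonoDarts_le G (colorCut c P i)) (minMonoDarts_le G (colorCut c Pᶜ i))
  rw [← hS, monoDarts_within]
  exact (Nat.add_le_add_right six_cuts _).trans (hc.sum_card_monoDarts_colorCut_le P)

end PartialColoring

section K4Free

variable {V : Type*} {G : SimpleGraph V}

lemma not_adj_of_cliqueFree_four (hG : G.CliqueFree 4) {x y u v : V} (hxy : G.Adj x y)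
    (hxu : G.Adj x u) (hyu : G.Adj y u) (hxv : G.Adj x v) (hyv : G.Adj y v) : ¬G.Adj u v := by
  classical
  intro huv
  have triangle : G.IsNClique 3 {y, u, v} := is3Clique_triple_iff.2 ⟨hyu, hyv, huv⟩
  exact hG _ (triangle.insert (a := x) (by simp [hxy, hxu, hxv]))

variable [DecidableRel G.Adj]

variable (G) in
/-- Colours the common neighbours of any two of `x`, `y`, `z`. If these form a triangle of a
`K₄`-free graph, then no vertex is adjacent to all three and the order of the cases is
irrelevant. -/
def triangleColoring (x y z v : V) : Option (Fin 3) :=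
  if G.Adj x v ∧ G.Adj y v then some 0
  else if G.Adj y v ∧ G.Adj z v then some 1
  else if G.Adj z v ∧ G.Adj x v then some 2
  else none

lemma isPartialColoring_triangleColoring (hG : G.CliqueFree 4) {x y z : V} (hxy : G.Adj x y)
    (hyz : G.Adj y z) (hzx : G.Adj z x) : IsPartialColoring G (triangleColoring G x y z) := by
  have not_adj_xy {u v} := not_adj_of_cliqueFree_four hG hxy (u := u) (v := v)
  have not_adj_yz {u v} := not_adj_of_cliqueFree_four hG hyz (u := u) (v := v)
  have not_adj_zx {u v} := not_adj_of_cliqueFree_four hG hzx (u := u) (v := v)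
  intro u v huv hcolor
  grind [triangleColoring]

variable [Fintype V]

lemma sum_codegree_add_card_uncolored [DecidableEq V] (hG : G.CliqueFree 4) {x y z : V}
    (hxy : G.Adj x y) (hyz : G.Adj y z) (hzx : G.Adj z x) :
    codegree G x y + codegree G y z + codegree G z x +
      #(uncolored (triangleColoring G x y z)) = Fintype.card V := by
  have no_common_neighbor {v} (hx : G.Adj x v) (hy : G.Adj y v) : ¬G.Adj z v :=
    not_adj_of_cliqueFree_four hG hxy hzx.symm hyz hx hy
  simp only [codegree, neighborFinset_eq_filter, ← filter_and, uncolored, card_filter]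
  rw [← sum_add_distrib, ← sum_add_distrib, ← sum_add_distrib, ← card_univ, card_eq_sum_ones]
  refine sum_congr rfl fun v _ ↦ ?_
  grind [triangleColoring]

lemma exists_isPartialColoring (hG : G.CliqueFree 4) (h : (orderedTriangles G).Nonempty) :
    ∃ c : V → Option (Fin 3), IsPartialColoring G c ∧
      3 * #(orderedTriangles G) + Fintype.card G.Dart * #(uncolored c) ≤
        Fintype.card G.Dart * Fintype.card V := by
  classical
  obtain ⟨⟨x, y, z⟩, ht, hcodegree⟩ := exists_orderedTriangle_codegree_ge h
  obtain ⟨hxy, hyz, hzx⟩ := (mem_filter.1 ht).2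
  refine ⟨triangleColoring G x y z, isPartialColoring_triangleColoring hG hxy hyz hzx, ?_⟩
  rw [← sum_codegree_add_card_uncolored hG hxy hyz hzx, mul_add]
  exact Nat.add_le_add_right hcodegree _

end K4Free

section Numerics

variable {n D r : ℝ}

lemma sparse_contradiction (hn : 0 ≤ n) (hr : 0 ≤ r) (hlow : 4 * n ^ 2 < 9 * D)
    (hhigh : 15 * D ≤ 7 * n ^ 2) (hrD : 6 * n * r * D < (2 * n ^ 2 - 3 * D) * (6 * D - n ^ 2))
    (hr2 : 14 * n ^ 2 < 27 * D + 8 * r ^ 2) : False := by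
  have hr_lt : 12 * r < 5 * n := by
    have product_pos : 0 < (9 * D - 4 * n ^ 2) * (4 * D - n ^ 2) := by
      apply mul_pos <;> nlinarith
    have : 0 < n * D := by nlinarith
    nlinarith
  have hr_sq_lt : (12 * r) ^ 2 < (5 * n) ^ 2 := by gcongr
  linarith

lemma cubic_le {q : ℝ} (hq : 0 ≤ q) (hlow : 7 * q ≤ 15 * D) :
    (2 * q - 3 * D) * (6 * D - q) ^ 2 ≤ 9 * q * D ^ 2 := by
  -- In powers of `t = D - 7 / 15 * q` and `q`, all coefficients of the difference are positive.
  obtain ⟨t, rfl⟩ : ∃ t, D = 7 / 15 * q + t := ⟨D - 7 / 15 * q, by ring⟩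
  have ht : 0 ≤ t := by linarith
  refine sub_nonneg.1 ?_
  calc 0 ≤ 108 * t ^ 3 + 261 / 5 * t ^ 2 * q + 129 / 25 * t * q ^ 2 + 2 / 125 * q ^ 3 := by
        positivity
    _ = 9 * q * (7 / 15 * q + t) ^ 2 -
          (2 * q - 3 * (7 / 15 * q + t)) * (6 * (7 / 15 * q + t) - q) ^ 2 := by ring

lemma dense_contradiction (hn : 0 ≤ n) (hr : 0 ≤ r) (hlow : 7 * n ^ 2 ≤ 15 * D)
    (hhigh : 3 * D ≤ 2 * n ^ 2)
    (hrD : 6 * n * r * D < (2 * n ^ 2 - 3 * D) * (6 * D - n ^ 2))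
    (hr2 : 2 * n ^ 2 - 3 * D ≤ 4 * r ^ 2) : False := by
  have hD : 0 ≤ D := by nlinarith
  exact lt_irrefl _ <|
    calc (2 * n ^ 2 - 3 * D) * (9 * n ^ 2 * D ^ 2)
        ≤ 4 * r ^ 2 * (9 * n ^ 2 * D ^ 2) := by gcongr
      _ = (6 * n * r * D) ^ 2 := by ring
      _ < ((2 * n ^ 2 - 3 * D) * (6 * D - n ^ 2)) ^ 2 := by gcongr
      _ = (2 * n ^ 2 - 3 * D) * ((2 * n ^ 2 - 3 * D) * (6 * D - n ^ 2) ^ 2) := by ring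
      _ ≤ (2 * n ^ 2 - 3 * D) * (9 * n ^ 2 * D ^ 2) :=
        mul_le_mul_of_nonneg_left (cubic_le (sq_nonneg n) hlow) (by linarith)

-- `D` and `T` are the numbers of darts and ordered triangles of `G`, `r` and `c` the numbers of
-- vertices and darts of `G[R]`, and `β` and `γ` are `minMonoDarts` of `G` and `G[R]`.
lemma nine_mul_le_two_mul_sq {n D T r β c γ : ℕ} (hn : 0 < n) (half : 2 * β ≤ D)
    (turan : 3 * D ≤ 2 * n ^ 2) (neighborhoods : n ^ 2 * β + 2 * D ^ 2 ≤ n ^ 2 * D + 2 * n * T)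
    (triangle : 3 * T + D * r ≤ D * n) (three_cuts : 3 * β ≤ D + 2 * c)
    (six_cuts : 6 * β + 3 * c ≤ 3 * D + 6 * γ) (turan_rest : 3 * c ≤ 2 * r ^ 2)
    (rest : 9 * γ ≤ 2 * r ^ 2) : 9 * β ≤ 2 * n ^ 2 := by
  by_contra! hβ
  have hr : (0 : ℝ) ≤ r := r.cast_nonneg
  rify at *
  have hrD : (6 * n * r * D : ℝ) < (2 * n ^ 2 - 3 * D) * (6 * D - n ^ 2) := by
    have : (n ^ 2 * (2 * n ^ 2) : ℝ) < n ^ 2 * (9 * β) := by gcongr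
    have := mul_le_mul_of_nonneg_left triangle hn.le
    linarith
  rcases le_total (15 * D : ℝ) (7 * n ^ 2) with sparse | dense
  · exact sparse_contradiction hn.le hr (by linarith) sparse hrD (by linarith)
  · exact dense_contradiction hn.le hr dense turan hrD (by linarith)

end Numerics

theorem nine_mul_minMonoDarts_le {V : Type*} [Fintype V] [DecidableEq V] (G : SimpleGraph V)
    [DecidableRel G.Adj] (hG : G.CliqueFree 4) : 9 * minMonoDarts G ≤ 2 * Fintype.card V ^ 2 := by
  induction h : Fintype.card V using Nat.strong_induction_on generalizing V with
  | _ n ih =>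
    subst h
    rcases (orderedTriangles G).eq_empty_or_nonempty with triangle_free | has_triangle
    · have := eight_mul_minMonoDarts_le triangle_free
      lia
    obtain ⟨c, hc, triangle⟩ := exists_isPartialColoring hG has_triangle
    have hT := has_triangle.card_pos
    have card_lt : #(uncolored c) < Fintype.card V :=
      lt_of_mul_lt_mul_left (a := Fintype.card G.Dart) (by lia) (Nat.zero_le _)
    have hH : (G.induce (uncolored c : Set V)).CliqueFree 4 :=
      hG.comap ⟨(Embedding.induce _).toCopy⟩
    have turan_rest := mul_card_dart_le_of_cliqueFree hH
    have rest := ih _ (by simpa using card_lt) _ hH rfl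
    simp only [coe_sort_coe, Fintype.card_coe] at turan_rest rest
    exact nine_mul_le_two_mul_sq (Nat.zero_lt_of_lt card_lt) two_mul_minMonoDarts_le_card_dart
      (mul_card_dart_le_of_cliqueFree hG) sq_card_mul_minMonoDarts_add_le triangle
      hc.three_mul_minMonoDarts_le hc.six_mul_minMonoDarts_le turan_rest rest

end BipartiteDistance

open BipartiteDistance

open Classical in
theorem k4free_bipartite_distance_general {V : Type*} [Fintype V] (G : SimpleGraph V)
    [DecidableRel G.Adj] (hG : G.CliqueFree 4) :
    ∃ S : Finset V,
      ((G.edgeFinset.filter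
        (fun e => (∀ v ∈ e, v ∈ S) ∨ (∀ v ∈ e, v ∉ S))).card : ℝ) ≤ Fintype.card V ^ 2 / 9 := by
  obtain ⟨S, hS⟩ := exists_card_monoDarts_eq G
  refine ⟨S, ?_⟩
  have two_mul_le := nine_mul_minMonoDarts_le G hG
  rw [← hS, card_monoDarts_eq_two_mul] at two_mul_le
  rw [le_div_iff₀ (by norm_num)]
  norm_cast
  lia

open Classical in
/-- Every `K₄`-free graph on `n` vertices can be made bipartite by removing
at most `n² / 9` edges. -/
theorem k4free_bipartite_distance (n : ℕ) (G : SimpleGraph (Fin n))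
    [DecidableRel G.Adj] (hG : G.CliqueFree 4) :
    ∃ S : Finset (Fin n),
      ((G.edgeFinset.filter
        (fun e => (∀ v ∈ e, v ∈ S) ∨ (∀ v ∈ e, v ∉ S))).card : ℝ) ≤ n ^ 2 / 9 := by
  convert! k4free_bipartite_distance_general G hG
  simp
end

section
/- Every K_4-free graph G on n vertices contains a set S of ⌊n/2⌋ vertices such that the number of edges of G with both endpoints in S is at most n^2/18. -/
/-!
Fractional vertex sets suffice: shifting weight between two vertices moves the number of edges
spanned along a concave function, hence every fractional set can be rounded without gaining edges.

Suppose that each fractional half spans more than `n ^ 2 / 18` edges. The neighbourhood `N` of a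
vertex of maximum degree is triangle-free, and its density `d` bounds all relative degrees. If
`d < 1 / 2`, comparing the two sides of a large cut of `N`, each topped up to a half, bounds the
size of the cut from above, whereas `N` has a larger one, as it is triangle-free and dense. If
`2 / 3 ≤ d`, an independent set in `N` together with a multiple of the rest of `N` is a sparse half.

In the remaining range take a maximum cut `P ∪ R` of `N`. In each side the heavy vertices, those
adjacent to more than half of the other side, form an independent set. Test sets built from the
heavy and the light vertices bound the degrees of the light vertices into the two heavy parts
on average, while triangle-freeness and the heavy/light distinction restrict the pair of degrees of
each light vertex. These constraints contradict each other; the final polynomial inequalities, in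
at most four variables, are verified by interval arithmetic with bisection.
-/

namespace SparseHalf

open scoped Matrix

/-! ### Branch and bound for polynomial inequalities -/

/-- Polynomial expressions in the variables `var 0, var 1, …`: the language in which systems of
inequalities are handed to the branch and bound procedure `Box.refute`. The constant `frac a b`
stands for `a / b`. -/
inductive PolyExpr where
  | frac : ℕ → ℕ → PolyExpr
  | var : ℕ → PolyExpr
  | add : PolyExpr → PolyExpr → PolyExpr
  | sub : PolyExpr → PolyExpr → PolyExpr
  | mul : PolyExpr → PolyExpr → PolyExpr

namespace PolyExpr

instance : Add PolyExpr := ⟨add⟩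
instance : Sub PolyExpr := ⟨sub⟩
instance : Mul PolyExpr := ⟨mul⟩

/-- The value of an expression at the point with coordinates `w`. -/
noncomputable def eval (w : List ℝ) : PolyExpr → ℝ
  | frac a b => a / b
  | var i => w.getD i 0
  | add e f => eval w e + eval w f
  | sub e f => eval w e - eval w f
  | mul e f => eval w e * eval w f

/-- Every difference occurring in the expression is nonnegative at `w`. The endpoints of our
intervals are natural numbers, so that only such evaluations can be enclosed. -/
def NonnegSub (w : List ℝ) : PolyExpr → Prop
  | frac _ _ => True
  | var _ => True
  | add e f => NonnegSub w e ∧ NonnegSub w f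
  | sub e f => NonnegSub w e ∧ NonnegSub w f ∧ eval w f ≤ eval w e
  | mul e f => NonnegSub w e ∧ NonnegSub w f

/-- The constraint `c.1 ≤ c.2` is satisfied at `w`, with all differences nonnegative. -/
def Holds (w : List ℝ) (c : PolyExpr × PolyExpr) : Prop :=
  NonnegSub w c.1 ∧ NonnegSub w c.2 ∧ eval w c.1 ≤ eval w c.2

variable (w : List ℝ) (e f : PolyExpr)

@[simp] theorem eval_frac (a b : ℕ) : eval w (frac a b) = a / b := rfl
@[simp] theorem eval_var (i : ℕ) : eval w (var i) = w.getD i 0 := rfl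
@[simp] theorem eval_add : eval w (e + f) = eval w e + eval w f := rfl
@[simp] theorem eval_sub : eval w (e - f) = eval w e - eval w f := rfl
@[simp] theorem eval_mul : eval w (e * f) = eval w e * eval w f := rfl
@[simp] theorem nonnegSub_frac (a b : ℕ) : NonnegSub w (frac a b) := trivial
@[simp] theorem nonnegSub_var (i : ℕ) : NonnegSub w (var i) := trivial
@[simp] theorem nonnegSub_add : NonnegSub w (e + f) ↔ NonnegSub w e ∧ NonnegSub w f := Iff.rfl
@[simp] theorem nonnegSub_sub :
    NonnegSub w (e - f) ↔ NonnegSub w e ∧ NonnegSub w f ∧ eval w f ≤ eval w e := Iff.rfl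
@[simp] theorem nonnegSub_mul : NonnegSub w (e * f) ↔ NonnegSub w e ∧ NonnegSub w f := Iff.rfl

end PolyExpr

open PolyExpr

/-- The common denominator of the endpoints of the intervals. -/
def scale : ℕ := 2 ^ 30

theorem scale_pos : (0 : ℝ) < scale := by norm_num [scale]

theorem natCast_div_le_mul {m n : ℕ} {x : ℝ} (h : (m : ℝ) ≤ x * n) (hn : 0 < n) :
    ((m / n : ℕ) : ℝ) ≤ x :=
  Nat.cast_div_le.trans ((div_le_iff₀ (by exact_mod_cast hn)).2 h)

theorem le_natCast_div_add_one {m n : ℕ} {x : ℝ} (h : x * n ≤ m) (hn : 0 < n) :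
    x ≤ ((m / n + 1 : ℕ) : ℝ) := by
  have hlt : (m : ℝ) < (m / n + 1 : ℕ) * n := by
    exact_mod_cast Nat.lt_mul_of_div_lt (Nat.lt_succ_self _) hn
  exact (lt_of_mul_lt_mul_right (h.trans_lt hlt) n.cast_nonneg).le

/-- A product of intervals, given by the numerators over `scale` of their endpoints. -/
abbrev Box := List (ℕ × ℕ)

/-- The real number `x` lies in the interval with endpoints `p.1 / scale` and `p.2 / scale`. -/
def MemInterval (p : ℕ × ℕ) (x : ℝ) : Prop := p.1 ≤ scale * x ∧ scale * x ≤ p.2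

/-- An interval containing `[0, a / b]`. -/
def intervalTo (a b : ℕ) : ℕ × ℕ := (0, a * scale / b + 1)

theorem memInterval_intervalTo {a b : ℕ} {x : ℝ} (hx : 0 ≤ x) (hxab : x ≤ a / b)
    (hb : 0 < b := by decide) : MemInterval (intervalTo a b) x := by
  refine ⟨by simpa [intervalTo] using mul_nonneg scale_pos.le hx, le_natCast_div_add_one ?_ hb⟩
  rw [le_div_iff₀ (by exact_mod_cast hb)] at hxab
  push_cast
  nlinarith [scale_pos]

namespace Box

/-- The point with coordinates `w` lies in the box `b`. -/
def Mem (b : Box) (w : List ℝ) : Prop := List.Forall₂ MemInterval b w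

/-- Interval evaluation of an expression on a box, rounded outwards. -/
def enclosure (b : Box) : PolyExpr → ℕ × ℕ
  | .frac m n => if n = 0 then (0, 0) else (m * scale / n, m * scale / n + 1)
  | .var i => b.getD i (0, 0)
  | .add e f => ((enclosure b e).1 + (enclosure b f).1, (enclosure b e).2 + (enclosure b f).2)
  | .sub e f => ((enclosure b e).1 - (enclosure b f).2, (enclosure b e).2 - (enclosure b f).1)
  | .mul e f => ((enclosure b e).1 * (enclosure b f).1 / scale,
      (enclosure b e).2 * (enclosure b f).2 / scale + 1)

/-- Interval evaluation shows that some constraint fails on the whole box. -/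
def violates (b : Box) (cs : List (PolyExpr × PolyExpr)) : Bool :=
  cs.any fun c ↦ (enclosure b c.2).2.blt (enclosure b c.1).1

/-- The part of the box whose `i`-th coordinate lies below the midpoint. -/
def lowerHalf (b : Box) (i : ℕ) : Box := b.modify i fun p ↦ (p.1, (p.1 + p.2) / 2)

/-- The part of the box whose `i`-th coordinate lies above the midpoint. -/
def upperHalf (b : Box) (i : ℕ) : Box := b.modify i fun p ↦ ((p.1 + p.2) / 2, p.2)

/-- Branch and bound: bisect the coordinates cyclically, starting with the last one and to depth at
most `n`, until each piece violates one of the constraints. The depth should be a multiple of the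
dimension. -/
def refute (cs : List (PolyExpr × PolyExpr)) : ℕ → Box → Bool
  | 0, b => b.violates cs
  | n + 1, b => b.violates cs ||
      (refute cs n (b.lowerHalf (n % b.length)) && refute cs n (b.upperHalf (n % b.length)))

theorem memInterval_enclosure {b : Box} {w : List ℝ} (hw : b.Mem w) :
    ∀ {e : PolyExpr}, e.NonnegSub w → MemInterval (b.enclosure e) (e.eval w)
  | .frac m n, _ => by
    rcases n.eq_zero_or_pos with rfl | hn
    · simp [enclosure, eval, MemInterval]
    have hval : (scale : ℝ) * (m / n) * n = m * scale := by field_simp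
    rw [enclosure, if_neg hn.ne']
    refine ⟨natCast_div_le_mul ?_ hn, le_natCast_div_add_one ?_ hn⟩ <;>
      simp only [eval, hval, Nat.cast_mul, le_refl]
  | .var i, _ => by
    simp only [enclosure, eval]
    have hzero : MemInterval (0, 0) 0 := by simp [MemInterval]
    rw [Mem, List.forall₂_iff_get] at hw
    by_cases hi : i < b.length
    · simpa [List.getD_eq_getElem, hi, hw.1 ▸ hi] using hw.2 i hi (hw.1 ▸ hi)
    · simpa [List.getD_eq_default, not_lt.1 hi, hw.1 ▸ not_lt.1 hi] using hzero
  | .add e f, h => by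
    have he := memInterval_enclosure hw h.1
    have hf := memInterval_enclosure hw h.2
    simp only [MemInterval, enclosure, eval, mul_add, Nat.cast_add]
    exact ⟨add_le_add he.1 hf.1, add_le_add he.2 hf.2⟩
  | .sub e f, ⟨he, hf, hfe⟩ => by
    have he := memInterval_enclosure hw he
    have hf := memInterval_enclosure hw hf
    simp only [MemInterval, enclosure, eval, mul_sub]
    constructor
    · rcases le_total (enclosure b f).2 (enclosure b e).1 with h | h
      · rw [Nat.cast_sub h]
        exact sub_le_sub he.1 hf.2
      · rw [Nat.sub_eq_zero_of_le h, Nat.cast_zero, sub_nonneg]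
        exact mul_le_mul_of_nonneg_left hfe scale_pos.le
    · have : ((enclosure b e).2 : ℝ) ≤ ((enclosure b e).2 - (enclosure b f).1 : ℕ) +
          (enclosure b f).1 := by exact_mod_cast le_tsub_add
      linarith [he.2, hf.1]
  | .mul e f, h => by
    have he := memInterval_enclosure hw h.1
    have hf := memInterval_enclosure hw h.2
    have hval : (scale : ℝ) * (e.eval w * f.eval w) * scale =
        (scale * e.eval w) * (scale * f.eval w) := by ring
    have hscale : 0 < scale := by norm_num [scale]
    simp only [enclosure, eval]
    refine ⟨natCast_div_le_mul ?_ hscale, le_natCast_div_add_one ?_ hscale⟩ <;>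
      rw [hval, Nat.cast_mul]
    · exact mul_le_mul he.1 hf.1 (Nat.cast_nonneg _) ((Nat.cast_nonneg _).trans he.1)
    · exact mul_le_mul he.2 hf.2 ((Nat.cast_nonneg _).trans hf.1) (Nat.cast_nonneg _)

theorem not_forall_holds_of_violates {b : Box} {cs : List (PolyExpr × PolyExpr)} {w : List ℝ}
    (hcs : b.violates cs) (hw : b.Mem w) : ¬ ∀ c ∈ cs, Holds w c := by
  intro h
  obtain ⟨c, hc, hlt⟩ := List.any_eq_true.1 hcs
  obtain ⟨h₁, h₂, hle⟩ := h c hc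
  have hlt : ((b.enclosure c.2).2 : ℝ) < (b.enclosure c.1).1 := by
    exact_mod_cast (Nat.blt_eq ▸ hlt : (b.enclosure c.2).2 < (b.enclosure c.1).1)
  exact (mul_le_mul_of_nonneg_left hle scale_pos.le).not_gt <|
    (memInterval_enclosure hw h₂).2.trans_lt <| hlt.trans_le (memInterval_enclosure hw h₁).1

theorem mem_lowerHalf_or_mem_upperHalf {b : Box} {w : List ℝ} (hw : b.Mem w) (i : ℕ) :
    (b.lowerHalf i).Mem w ∨ (b.upperHalf i).Mem w := by
  induction hw generalizing i with
  | nil => exact .inl (by simp [lowerHalf, Mem])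
  | @cons p x b w hx hw ih =>
    cases i with
    | zero =>
      rcases le_total (scale * x) ((p.1 + p.2) / 2 : ℕ) with h | h
      · exact .inl (.cons ⟨hx.1, h⟩ hw)
      · exact .inr (.cons ⟨h, hx.2⟩ hw)
    | succ i => exact (ih i).imp (.cons hx) (.cons hx)

theorem not_forall_holds_of_refute {cs : List (PolyExpr × PolyExpr)} {w : List ℝ} :
    ∀ (n : ℕ) {b : Box}, refute cs n b → b.Mem w → ¬ ∀ c ∈ cs, Holds w c
  | 0, _, h, hw => not_forall_holds_of_violates h hw
  | n + 1, b, h, hw => by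
    rw [refute, Bool.or_eq_true, Bool.and_eq_true] at h
    rcases h with h | ⟨hlower, hupper⟩
    · exact not_forall_holds_of_violates h hw
    rcases mem_lowerHalf_or_mem_upperHalf hw (n % b.length) with hw | hw
    · exact not_forall_holds_of_refute n hlower hw
    · exact not_forall_holds_of_refute n hupper hw

end Box

/-! ### Inequalities for light vertices -/

section Weight

/-- The negation of `weight_mul_slack_lt` at `d = 1 / 2 + t`, where the expressions `y` and `kSq`
stand for `y` and `k ^ 2`. The coordinates are `z, u, t, x`, of which `u` occurs only in `y` and
`kSq`. -/
def weightSystem (y kSq : PolyExpr) : List (PolyExpr × PolyExpr) :=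
  let z := var 0
  let t := var 2
  let x := var 3
  let d := frac 1 2 + t
  let e := frac 1 6 - t
  let q := frac 1 2 - (t + z)
  let G := frac 1 36 - t * t
  let L := (frac 21 20 - frac 11 10 * t) * x + t * y + (frac 21 80 - frac 1 40 * t) * z + frac 1 36
  let C := frac 1 4 * (d - z) * G
  let Q := (frac 1 2 - z) * (frac 1 2 * (d - z) - (x + y))
  [(z, frac 61 20 * G), (x, y), (x + y, frac 1 2 * (d - z)), (frac 1 2 * t, L),
    (q * (x * y + kSq), C), (frac 1 2 * e * e * Q, (L - frac 1 2 * t) * (C - q * (x * y + kSq)))]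

/-- The negation of `weight_mul_slack_lt` for `y ≤ (d + z) / 4`, where `k = 0` is the worst case.
The coordinates are `z, y, t, x`. -/
def lowSystem : List (PolyExpr × PolyExpr) :=
  (var 1, frac 1 4 * (frac 1 2 + var 2 + var 0)) :: weightSystem (var 1) (frac 0 1)

/-- The negation of `weight_mul_slack_lt` for `(d + z) / 4 ≤ y`, where the worst case is the least
`k` that the bound on `y` permits. The coordinates are `z, k, t, x`. -/
def highSystem : List (PolyExpr × PolyExpr) :=
  weightSystem (frac 1 4 * (frac 1 2 + var 2 + var 0) + frac 1 2 * var 1) (var 1 * var 1)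

theorem refute_lowSystem : Box.refute lowSystem 60
    [intervalTo 9 100, intervalTo 1 5, intervalTo 1 6, intervalTo 1 6] := by
  decide +kernel

theorem refute_highSystem : Box.refute highSystem 60
    [intervalTo 9 100, intervalTo 1 3, intervalTo 1 6, intervalTo 1 6] := by
  decide +kernel

theorem forall_holds_weightSystem {z u t x y k L C Q : ℝ} {ye ke : PolyExpr}
    (hye : ye.NonnegSub [z, u, t, x]) (hy : ye.eval [z, u, t, x] = y)
    (hke : ke.NonnegSub [z, u, t, x]) (hk : ke.eval [z, u, t, x] = k)
    (hL : (21 / 20 - 11 / 10 * t) * x + t * y + (21 / 80 - 1 / 40 * t) * z + 1 / 36 = L)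
    (hC : 1 / 4 * (1 / 2 + t - z) * (1 / 36 - t * t) = C)
    (hQ : (1 / 2 - z) * (1 / 2 * (1 / 2 + t - z) - (x + y)) = Q)
    (ht₀ : 0 ≤ t) (htz : t + z ≤ 1 / 2) (htt : t * t ≤ 1 / 36)
    (hzt : z ≤ 61 / 20 * (1 / 36 - t * t)) (hxy : x ≤ y) (hs : x + y ≤ 1 / 2 * (1 / 2 + t - z))
    (hL₀ : 1 / 2 * t ≤ L) (hC₀ : (1 / 2 - (t + z)) * (x * y + k) ≤ C)
    (hLC : 1 / 2 * (1 / 6 - t) * (1 / 6 - t) * Q ≤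
      (L - 1 / 2 * t) * (C - (1 / 2 - (t + z)) * (x * y + k))) :
    ∀ c ∈ weightSystem ye ke, Holds [z, u, t, x] c := by
  have ht₁ : t ≤ 1 / 6 := by nlinarith
  have hz₁ : z ≤ 1 / 2 := by linarith
  have hzd : z ≤ 1 / 2 + t := by linarith
  have hx₁ : 11 / 10 * t ≤ 21 / 20 := by linarith
  have hz₂ : 1 / 40 * t ≤ 21 / 80 := by linarith
  simp [weightSystem, Holds, -one_div, *]

variable {z t x y k : ℝ}

theorem weight_mul_slack_lt_of_le {L C : ℝ}
    (hL : (21 / 20 - 11 / 10 * t) * x + t * y + (21 / 80 - 1 / 40 * t) * z + 1 / 36 = L)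
    (hC : 1 / 4 * (1 / 2 + t - z) * (1 / 36 - t * t) = C) (hz : 0 ≤ z) (ht : 0 ≤ t) (hx : 0 ≤ x)
    (htt : t * t ≤ 1 / 36) (hzt : z ≤ 61 / 20 * (1 / 36 - t * t)) (hxy : x ≤ y)
    (hy : y ≤ 1 / 4 * (1 / 2 + t + z)) (hs : x + y ≤ 1 / 2 * (1 / 2 + t - z))
    (hL₀ : 1 / 2 * t ≤ L) (hC₀ : (1 / 2 - (t + z)) * (x * y + k ^ 2) ≤ C) :
    (L - 1 / 2 * t) * (C - (1 / 2 - (t + z)) * (x * y + k ^ 2)) <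
      1 / 2 * (1 / 6 - t) ^ 2 * ((1 / 2 - z) * (1 / 2 * (1 / 2 + t - z) - (x + y))) := by
  have ht₁ : t ≤ 1 / 6 := by nlinarith
  have hz₁ : z ≤ 61 / 720 := by nlinarith
  by_contra! hle
  have hk : 0 ≤ (1 / 2 - (t + z)) * k ^ 2 := mul_nonneg (by linarith) (sq_nonneg k)
  refine Box.not_forall_holds_of_refute _ refute_lowSystem (w := [z, y, t, x])
    (.cons (memInterval_intervalTo hz ?_) <| .cons (memInterval_intervalTo (hx.trans hxy) ?_) <|
      .cons (memInterval_intervalTo ht ?_) <| .cons (memInterval_intervalTo hx ?_) .nil) <|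
    List.forall_mem_cons.2 ⟨?_, forall_holds_weightSystem (y := y) (k := 0) trivial rfl trivial
      (by simp) hL hC rfl ht ?_ htt hzt hxy hs hL₀ ?_ (.trans ?_ <| hle.trans <|
        mul_le_mul_of_nonneg_left (?_ : _ ≤ _) (sub_nonneg.2 hL₀))⟩
  case refine_5 => simpa [Holds, -one_div] using hy
  all_goals norm_num
  all_goals linarith

theorem weight_mul_slack_lt_of_ge {L C : ℝ}
    (hL : (21 / 20 - 11 / 10 * t) * x + t * y + (21 / 80 - 1 / 40 * t) * z + 1 / 36 = L)
    (hC : 1 / 4 * (1 / 2 + t - z) * (1 / 36 - t * t) = C) (hz : 0 ≤ z) (ht : 0 ≤ t) (hx : 0 ≤ x)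
    (htt : t * t ≤ 1 / 36) (hzt : z ≤ 61 / 20 * (1 / 36 - t * t)) (hxy : x ≤ y)
    (hy : 1 / 4 * (1 / 2 + t + z) ≤ y) (hyk : y ≤ 1 / 4 * (1 / 2 + t + z) + 1 / 2 * k)
    (hs : x + y ≤ 1 / 2 * (1 / 2 + t - z))
    (hL₀ : 1 / 2 * t ≤ L) (hC₀ : (1 / 2 - (t + z)) * (x * y + k ^ 2) ≤ C) :
    (L - 1 / 2 * t) * (C - (1 / 2 - (t + z)) * (x * y + k ^ 2)) <
      1 / 2 * (1 / 6 - t) ^ 2 * ((1 / 2 - z) * (1 / 2 * (1 / 2 + t - z) - (x + y))) := by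
  have ht₁ : t ≤ 1 / 6 := by nlinarith
  have hz₁ : z ≤ 61 / 720 := by nlinarith
  by_contra! hle
  obtain ⟨j, rfl⟩ : ∃ j, 1 / 4 * (1 / 2 + t + z) + 1 / 2 * j = y :=
    ⟨2 * y - 1 / 2 * (1 / 2 + t + z), by ring⟩
  have hj : 0 ≤ j := by linarith
  have hjk : (1 / 2 - (t + z)) * (j * j) ≤ (1 / 2 - (t + z)) * k ^ 2 :=
    mul_le_mul_of_nonneg_left (by nlinarith) (by linarith)
  refine Box.not_forall_holds_of_refute _ refute_highSystem (w := [z, j, t, x])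
    (.cons (memInterval_intervalTo hz ?_) <| .cons (memInterval_intervalTo hj ?_) <|
      .cons (memInterval_intervalTo ht ?_) <| .cons (memInterval_intervalTo hx ?_) .nil) <|
    forall_holds_weightSystem (k := j * j) (by simp) (by simp) ⟨trivial, trivial⟩
      rfl hL hC rfl ht ?_ htt hzt hxy hs hL₀ ?_ (.trans ?_ <| hle.trans <|
        mul_le_mul_of_nonneg_left (?_ : _ ≤ _) (sub_nonneg.2 hL₀))
  all_goals norm_num
  all_goals linarith

theorem weight_mul_slack_lt {d L C : ℝ} (hd : 1 / 2 ≤ d) (hd' : d ≤ 2 / 3) (hz : 0 ≤ z)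
    (hzd : z ≤ 61 / 20 * (d * (1 - d) - 2 / 9)) (hx : 0 ≤ x) (hxy : x ≤ y)
    (hy : y ≤ d / 4 + z / 4 + k / 2) (hs : x + y ≤ (d - z) / 2)
    (hL : L = (8 / 5 - 11 / 10 * d) * x + (d - 1 / 2) * y + (11 / 10 - d / 10) * z / 4 -
      (d / 2 - 5 / 18)) (hL₀ : 0 ≤ L)
    (hC : C = (d - z) * (d * (1 - d) - 2 / 9) / 4 - (1 - d - z) * (x * y + k ^ 2)) (hC₀ : 0 ≤ C) :
    L * C < 1 / 2 * (2 / 3 - d) ^ 2 * ((1 / 2 - z) * ((d - z) / 2 - (x + y))) := by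
  obtain ⟨t, rfl⟩ : ∃ t, 1 / 2 + t = d := ⟨d - 1 / 2, by ring⟩
  have htt : t * t ≤ 1 / 36 := by nlinarith
  rw [hL] at hL₀
  rw [hC] at hC₀
  rw [hL, hC]
  rcases le_total y (1 / 4 * (1 / 2 + t + z)) with h | h
  · have := weight_mul_slack_lt_of_le (k := k) rfl rfl hz (by linarith) hx htt (by linarith) hxy h
      (by linarith) (by linarith) (by linarith)
    linarith
  · have := weight_mul_slack_lt_of_ge (k := k) rfl rfl hz (by linarith) hx htt (by linarith) hxy h
      (by linarith) (by linarith) (by linarith) (by linarith)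
    linarith

end Weight

section LightMass

/-- The negation of `base_lt_of_light_lt` in the coordinates `t, z`. The last constraint follows
from the first and the third on cancelling `z`; without it the box around `t = 1 / 6`, `z = 0`,
where both sides of the third vanish, could not be refuted. -/
def baseSystem : List (PolyExpr × PolyExpr) :=
  let t := var 0
  let z := var 1
  let d := frac 1 2 + t
  let G := frac 1 36 - t * t
  [(frac 61 20 * G, z), (frac 10 1 * z, frac 3 1 * d),
    (frac 1 8 * z * (frac 1 1 - frac 2 1 * z) * (d - frac 2 1 * z), frac 1 4 * (d - z) * G),
    (frac 61 20 * (frac 1 1 - frac 2 1 * z) * (d - frac 2 1 * z), frac 2 1 * (d - z))]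

/-- The negation of `excess_lt_of_light_lt` in the coordinates `k, t, z`. -/
def excessSystem : List (PolyExpr × PolyExpr) :=
  let k := var 0
  let t := var 1
  let z := var 2
  let d := frac 1 2 + t
  let q := frac 1 2 - (t + z)
  let G := frac 1 36 - t * t
  let h := d - frac 2 1 * k
  let c := frac 2 1 * z * (frac 1 1 - frac 2 1 * z)
  let A := frac 1 8 * z * (frac 1 1 - frac 2 1 * z) * (d - frac 2 1 * z)
  let B := frac 1 4 * (d - z) * G
  let P := frac 17 324 * d * d - frac 1 4 * z * (d - z)
  let K := frac 3 4 * k * k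
  [(frac 61 20 * G, z), (frac 10 1 * z, frac 3 1 * d), (q * h, c), (K, P),
    (h * (A + q * K), (c - q * h) * (P - K) + h * B)]

/-- The negation of `imbalance_le` in the coordinates `t, z, k, D`. -/
def imbalanceSystem : List (PolyExpr × PolyExpr) :=
  let t := var 0
  let z := var 1
  let k := var 2
  let D := var 3
  let d := frac 1 2 + t
  let q := frac 1 2 - (t + z)
  let G := frac 1 36 - t * t
  let h := d - frac 2 1 * k
  let A := frac 1 8 * z * (frac 1 1 - frac 2 1 * z) * (d - frac 2 1 * z)
  let B := frac 1 4 * (d - z) * G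
  let K := frac 3 4 * k * k + frac 1 4 * h * D
  [(z, frac 61 20 * G), (frac 1 1, frac 4 1 * k + d),
    (K + frac 1 4 * z * (d - z), frac 17 324 * d * d),
    (A + q * K, B + (frac 1 2 - z) * z * D)]

theorem refute_baseSystem : Box.refute baseSystem 40 [intervalTo 1 6, intervalTo 1 5] := by
  decide +kernel

theorem refute_excessSystem : Box.refute excessSystem 60
    [intervalTo 1 5, intervalTo 1 6, intervalTo 1 5] := by
  decide +kernel

theorem refute_imbalanceSystem : Box.refute imbalanceSystem 60
    [intervalTo 1 6, intervalTo 1 5, intervalTo 1 5, intervalTo 3 10] := by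
  decide +kernel

variable {t z k D : ℝ}

theorem base_lt_of_light_lt (ht : 0 ≤ t) (ht' : t ≤ 1 / 6) (hz : 0 ≤ z)
    (hzt : 10 * z ≤ 3 * (1 / 2 + t)) (hzG : 61 / 20 * (1 / 36 - t * t) < z) :
    1 / 4 * (1 / 2 + t - z) * (1 / 36 - t * t) <
      1 / 8 * z * (1 - 2 * z) * (1 / 2 + t - 2 * z) := by
  by_contra! hAB
  have htt : t * t ≤ 1 / 36 := by nlinarith
  have hz₁ : 2 * z ≤ 1 := by linarith
  have hz₂ : 2 * z ≤ 1 / 2 + t := by linarith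
  have hz₃ : z ≤ 1 / 2 + t := by linarith
  have hzpos : 0 < z := by linarith
  have hle : 61 / 20 * (1 - 2 * z) * (1 / 2 + t - 2 * z) ≤ 2 * (1 / 2 + t - z) := by
    refine le_of_mul_le_mul_left ?_ hzpos
    linarith [mul_le_mul_of_nonneg_left hzG.le (sub_nonneg.2 hz₃)]
  refine Box.not_forall_holds_of_refute _ refute_baseSystem (w := [t, z])
    (.cons (memInterval_intervalTo ht ?_) <| .cons (memInterval_intervalTo hz ?_) .nil) ?_
  case refine_3 => simp [baseSystem, Holds, -one_div, *, hzG.le]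
  all_goals norm_num; linarith

theorem excess_lt_of_light_lt (ht : 0 ≤ t) (ht' : t ≤ 1 / 6) (hz : 0 ≤ z)
    (hzt : 10 * z ≤ 3 * (1 / 2 + t)) (hzG : 61 / 20 * (1 / 36 - t * t) < z) (hk : 0 ≤ k)
    (hkt : 2 * k ≤ 1 / 2 + t)
    (hq : (1 / 2 - (t + z)) * (1 / 2 + t - 2 * k) ≤ 2 * z * (1 - 2 * z))
    (hP : 3 / 4 * k * k ≤ 17 / 324 * (1 / 2 + t) * (1 / 2 + t) - 1 / 4 * z * (1 / 2 + t - z)) :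
    (2 * z * (1 - 2 * z) - (1 / 2 - (t + z)) * (1 / 2 + t - 2 * k)) *
        (17 / 324 * (1 / 2 + t) * (1 / 2 + t) - 1 / 4 * z * (1 / 2 + t - z) - 3 / 4 * k * k) +
        (1 / 2 + t - 2 * k) * (1 / 4 * (1 / 2 + t - z) * (1 / 36 - t * t)) <
      (1 / 2 + t - 2 * k) * (1 / 8 * z * (1 - 2 * z) * (1 / 2 + t - 2 * z) +
        (1 / 2 - (t + z)) * (3 / 4 * k * k)) := by
  by_contra! hle
  have htt : t * t ≤ 1 / 36 := by nlinarith
  have hz₁ : 2 * z ≤ 1 := by linarith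
  have hz₂ : 2 * z ≤ 1 / 2 + t := by linarith
  have hz₃ : z ≤ 1 / 2 + t := by linarith
  have hz₄ : t + z ≤ 1 / 2 := by linarith
  have hP' : 1 / 4 * z * (1 / 2 + t - z) ≤ 17 / 324 * (1 / 2 + t) * (1 / 2 + t) := by
    linarith [mul_self_nonneg k]
  refine Box.not_forall_holds_of_refute _ refute_excessSystem (w := [k, t, z])
    (.cons (memInterval_intervalTo hk ?_) <| .cons (memInterval_intervalTo ht ?_) <|
      .cons (memInterval_intervalTo hz ?_) .nil) ?_
  case refine_4 => simp [excessSystem, Holds, -one_div, *, hzG.le]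
  case refine_1 => norm_num; nlinarith
  all_goals norm_num; linarith

theorem light_le (ht : 0 ≤ t) (ht' : t ≤ 1 / 6) (hz : 0 ≤ z) (hzt : 10 * z ≤ 3 * (1 / 2 + t))
    (hk : 0 ≤ k) (hkt : 2 * k ≤ 1 / 2 + t) (hD : 0 ≤ D)
    (hM : 3 / 4 * k * k + 1 / 4 * (1 / 2 + t - 2 * k) * D + 1 / 4 * z * (1 / 2 + t - z) ≤
      17 / 324 * (1 / 2 + t) * (1 / 2 + t))
    (hS : 1 / 8 * z * (1 - 2 * z) * (1 / 2 + t - 2 * z) +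
        (1 / 2 - (t + z)) * (3 / 4 * k * k + 1 / 4 * (1 / 2 + t - 2 * k) * D) ≤
      1 / 4 * (1 / 2 + t - z) * (1 / 36 - t * t) + (1 / 2 - z) * z * D) :
    z ≤ 61 / 20 * (1 / 36 - t * t) := by
  by_contra! hzG
  have hh : 0 ≤ 1 / 2 + t - 2 * k := sub_nonneg.2 hkt
  have hK : 0 ≤ (1 / 2 - (t + z)) * (3 / 4 * k * k) := mul_nonneg (by linarith) (by positivity)
  rcases le_total ((1 / 2 - (t + z)) * (1 / 2 + t - 2 * k)) (2 * z * (1 - 2 * z)) with hq | hq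
  · have hP : 1 / 4 * (1 / 2 + t - 2 * k) * D ≤ 17 / 324 * (1 / 2 + t) * (1 / 2 + t) -
        1 / 4 * z * (1 / 2 + t - z) - 3 / 4 * k * k := by linarith
    have hhD : 0 ≤ 1 / 4 * (1 / 2 + t - 2 * k) * D := by positivity
    refine (excess_lt_of_light_lt ht ht' hz hzt hzG hk hkt hq (by linarith)).not_ge ?_
    linarith [mul_le_mul_of_nonneg_left hS hh, mul_le_mul_of_nonneg_left hP (sub_nonneg.2 hq)]
  · linarith [base_lt_of_light_lt ht ht' hz hzt hzG, mul_le_mul_of_nonneg_right hq hD]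

theorem imbalance_le (ht : 0 ≤ t) (ht' : t ≤ 1 / 6) (hz : 0 ≤ z) (hk : 0 ≤ k)
    (hkt : 2 * k ≤ 1 / 2 + t) (hD : 0 ≤ D) (hD' : D ≤ 3 / 10)
    (hzG : z ≤ 61 / 20 * (1 / 36 - t * t))
    (hM : 3 / 4 * k * k + 1 / 4 * (1 / 2 + t - 2 * k) * D + 1 / 4 * z * (1 / 2 + t - z) ≤
      17 / 324 * (1 / 2 + t) * (1 / 2 + t))
    (hS : 1 / 8 * z * (1 - 2 * z) * (1 / 2 + t - 2 * z) +
        (1 / 2 - (t + z)) * (3 / 4 * k * k + 1 / 4 * (1 / 2 + t - 2 * k) * D) ≤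
      1 / 4 * (1 / 2 + t - z) * (1 / 36 - t * t) + (1 / 2 - z) * z * D) :
    4 * k ≤ 1 / 2 - t := by
  by_contra! hlt
  have htt : t * t ≤ 1 / 36 := by nlinarith
  have hz₀ : z ≤ 1 / 10 := by linarith [mul_self_nonneg t]
  have hz₁ : 2 * z ≤ 1 := by linarith
  have hz₂ : 2 * z ≤ 1 / 2 + t := by linarith
  have hz₃ : z ≤ 1 / 2 + t := by linarith
  have hz₄ : t + z ≤ 1 / 2 := by linarith
  have hz₅ : z ≤ 1 / 2 := by linarith
  have hhD : 0 ≤ 1 / 4 * (1 / 2 + t - 2 * k) * D :=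
    mul_nonneg (by linarith) hD
  have hzd : 0 ≤ z * (1 / 2 + t - z) := mul_nonneg hz (by linarith)
  have hlt' : 1 ≤ 4 * k + (1 / 2 + t) := by linarith
  refine Box.not_forall_holds_of_refute _ refute_imbalanceSystem (w := [t, z, k, D])
    (.cons (memInterval_intervalTo ht ?_) <| .cons (memInterval_intervalTo hz ?_) <|
      .cons (memInterval_intervalTo hk ?_) <| .cons (memInterval_intervalTo hD ?_) .nil) ?_
  case refine_5 => simp [imbalanceSystem, Holds, -one_div, *]
  case refine_3 => norm_num; nlinarith
  all_goals norm_num; linarith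

theorem light_le_and_imbalance_le {d δ s : ℝ} (hd : 1 / 2 ≤ d) (hd' : d ≤ 2 / 3) (hz : 0 ≤ z)
    (hzd : 10 * z ≤ 3 * d) (hkd : 2 * |k| ≤ d) (hδ : 0 ≤ δ) (hδ' : δ ≤ 3 / 10)
    (hM : k ^ 2 - k * s + s ^ 2 + z * (d - z) / 4 + (d / 4 - |k| / 2) * δ ≤ 17 / 324 * d ^ 2)
    (hS : (d - z) / 4 * (z - 2 * z ^ 2) +
        (1 - d - z) * ((d / 4 - |k| / 2) * δ + (k - s) ^ 2) ≤
      (d - z) * (d * (1 - d) - 2 / 9) / 4 + (1 / 2 - z) * (z * d / 4 - s * k + z * δ)) :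
    z ≤ 61 / 20 * (d * (1 - d) - 2 / 9) ∧ 4 * |k| ≤ 1 - d := by
  obtain ⟨t, rfl⟩ : ∃ t, 1 / 2 + t = d := ⟨d - 1 / 2, by ring⟩
  have hM' : 3 / 4 * |k| * |k| + 1 / 4 * (1 / 2 + t - 2 * |k|) * δ +
      1 / 4 * z * (1 / 2 + t - z) ≤ 17 / 324 * (1 / 2 + t) * (1 / 2 + t) := by
    linarith [abs_mul_abs_self k, sq_nonneg (k / 2 - s)]
  have hquad : 3 / 4 * (1 / 2 - (t + z)) * k ^ 2 ≤
      (1 / 2 - (t + z)) * (k - s) ^ 2 + (1 / 2 - z) * (s * k) := by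
    have h₁ : 0 ≤ t * (s + k / 2) ^ 2 := mul_nonneg (by linarith) (sq_nonneg _)
    have h₂ : 0 ≤ (1 / 2 - z - 3 / 2 * t) * (s - k / 2) ^ 2 :=
      mul_nonneg (by linarith) (sq_nonneg _)
    linarith
  have hS' : 1 / 8 * z * (1 - 2 * z) * (1 / 2 + t - 2 * z) +
        (1 / 2 - (t + z)) * (3 / 4 * |k| * |k| + 1 / 4 * (1 / 2 + t - 2 * |k|) * δ) ≤
      1 / 4 * (1 / 2 + t - z) * (1 / 36 - t * t) + (1 / 2 - z) * z * δ := by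
    rw [mul_assoc (3 / 4), abs_mul_abs_self]
    linarith
  have hzt := light_le (by linarith) (by linarith) hz hzd (abs_nonneg k) hkd hδ hM' hS'
  have hkt := imbalance_le (by linarith) (by linarith) hz (abs_nonneg k) hkd hδ hδ' hzt hM' hS'
  exact ⟨by linarith, by linarith⟩

end LightMass

/-! ### Rounding fractional vertex sets -/

section Rounding

variable {V : Type*} [Fintype V]

/-- The coordinates of `f` that are not yet rounded to `0` or `1`. -/
noncomputable def fractional (f : V → ℝ) : Finset V := {x | f x ≠ 0 ∧ f x ≠ 1}

theorem mem_fractional {f : V → ℝ} {x : V} : x ∈ fractional f ↔ f x ≠ 0 ∧ f x ≠ 1 := by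
  simp [fractional]

theorem eq_zero_or_eq_one_of_fractional_eq_empty {f : V → ℝ} (hf : fractional f = ∅) (x : V) :
    f x = 0 ∨ f x = 1 := by
  have hx : x ∉ fractional f := by simp [hf]
  rwa [mem_fractional, not_and_or, not_not, not_not] at hx

theorem dotProduct_mulVec_add_smul (A : Matrix V V ℝ) (f g : V → ℝ) (s : ℝ) :
    (f + s • g) ⬝ᵥ A *ᵥ (f + s • g) =
      f ⬝ᵥ A *ᵥ f + s * (f ⬝ᵥ A *ᵥ g + g ⬝ᵥ A *ᵥ f) + s ^ 2 * (g ⬝ᵥ A *ᵥ g) := by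
  simp only [Matrix.mulVec_add, Matrix.mulVec_smul, add_dotProduct, dotProduct_add,
    smul_dotProduct, dotProduct_smul, smul_eq_mul]
  ring

theorem dotProduct_mulVec_nonneg {A : Matrix V V ℝ} {f : V → ℝ} (hA : ∀ x y, 0 ≤ A x y)
    (hf : ∀ x, 0 ≤ f x) : 0 ≤ f ⬝ᵥ A *ᵥ f :=
  Finset.sum_nonneg fun x _ ↦
    mul_nonneg (hf x) (Finset.sum_nonneg fun y _ ↦ mul_nonneg (hA x y) (hf y))

theorem dotProduct_mulVec_single_sub_single_nonpos [DecidableEq V] {A : Matrix V V ℝ}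
    (hA : ∀ x y, 0 ≤ A x y) (hdiag : ∀ x, A x x = 0) (x y : V) :
    (Pi.single x 1 - Pi.single y 1 : V → ℝ) ⬝ᵥ A *ᵥ (Pi.single x 1 - Pi.single y 1) ≤ 0 := by
  simp only [Matrix.mulVec_sub, sub_dotProduct, dotProduct_sub, Matrix.mulVec_single_one,
    single_one_dotProduct, Matrix.col_apply, hdiag]
  linarith [hA x y, hA y x]

theorem exists_ne_mem_fractional {f : V → ℝ} {k : ℕ} (hsum : ∑ x, f x = k) {x : V}
    (hf : f x ∈ Set.Icc 0 1) (hx : x ∈ fractional f) : ∃ y ∈ fractional f, y ≠ x := by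
  classical
  by_contra! h
  obtain ⟨m, hm⟩ : f x ∈ (Int.castAddHom ℝ).range := by
    rw [← Finset.add_sum_erase _ f (Finset.mem_univ x), ← eq_sub_iff_add_eq] at hsum
    rw [hsum]
    refine sub_mem ⟨k, by simp⟩ (sum_mem fun z hz ↦ ?_)
    have hz : z ∉ fractional f := fun hz' ↦ Finset.ne_of_mem_erase hz (h z hz')
    rw [mem_fractional, not_and_or, not_not, not_not] at hz
    rcases hz with hz | hz
    · exact ⟨0, by simp [hz]⟩
    · exact ⟨1, by simp [hz]⟩
  rw [mem_fractional, ← hm] at hx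
  rw [← hm] at hf
  simp only [Int.coe_castAddHom, Set.mem_Icc, Int.cast_nonneg_iff, ne_eq, Int.cast_eq_zero] at hf hx
  have hm₀ : m ≠ 0 := hx.1
  have hm₁ : m ≠ 1 := fun h ↦ hx.2 (by simp [h])
  have hm₂ : m ≤ 1 := by exact_mod_cast hf.2
  omega

/-- Shifting weight from `y` to `x` until one of them becomes integral does not increase the form
if its first-order term is nonpositive: its second-order term `-(A x y + A y x)` always is. -/
theorem exists_fractional_ssubset_of_shift [DecidableEq V] {A : Matrix V V ℝ}
    (hA : ∀ x y, 0 ≤ A x y) (hdiag : ∀ x, A x x = 0) {f : V → ℝ} (hf : ∀ x, f x ∈ Set.Icc 0 1)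
    {x y : V} (hx : x ∈ fractional f) (hy : y ∈ fractional f) (hyx : y ≠ x)
    (hB : f ⬝ᵥ A *ᵥ (Pi.single x 1 - Pi.single y 1) +
      (Pi.single x 1 - Pi.single y 1 : V → ℝ) ⬝ᵥ A *ᵥ f ≤ 0) :
    ∃ g : V → ℝ, (∀ z, g z ∈ Set.Icc 0 1) ∧ ∑ z, g z = ∑ z, f z ∧
      g ⬝ᵥ A *ᵥ g ≤ f ⬝ᵥ A *ᵥ f ∧ fractional g ⊂ fractional f := by
  set s := min (1 - f x) (f y)
  have hs : 0 ≤ s := le_min (sub_nonneg.2 (hf x).2) (hf y).1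
  have hsx : s ≤ 1 - f x := min_le_left _ _
  have hsy : s ≤ f y := min_le_right _ _
  set g := f + s • (Pi.single x 1 - Pi.single y 1 : V → ℝ)
  have hgx : g x = f x + s := by simp [g, hyx.symm]
  have hgy : g y = f y - s := by simp [g, hyx, sub_eq_add_neg]
  have hg : ∀ z, z ≠ x → z ≠ y → g z = f z := fun z hzx hzy ↦ by simp [g, hzx, hzy]
  refine ⟨g, fun z ↦ ?_, ?_, ?_, ?_⟩
  · rcases eq_or_ne z x with rfl | hzx
    · exact hgx ▸ ⟨by linarith [(hf z).1], by linarith⟩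
    rcases eq_or_ne z y with rfl | hzy
    · exact hgy ▸ ⟨by linarith, by linarith [(hf z).2]⟩
    · exact hg z hzx hzy ▸ hf z
  · simp [g, Finset.sum_add_distrib, ← Finset.mul_sum]
  · rw [dotProduct_mulVec_add_smul]
    linarith [mul_nonpos_of_nonneg_of_nonpos hs hB, mul_nonpos_of_nonneg_of_nonpos (sq_nonneg s)
      (dotProduct_mulVec_single_sub_single_nonpos hA hdiag x y)]
  · refine (Finset.ssubset_iff_of_subset fun z hz ↦ ?_).2 ?_
    · rcases eq_or_ne z x with rfl | hzx
      · exact hx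
      rcases eq_or_ne z y with rfl | hzy
      · exact hy
      · rwa [mem_fractional, ← hg z hzx hzy, ← mem_fractional]
    · rcases min_choice (1 - f x) (f y) with h | h
      · exact ⟨x, hx, by simp [mem_fractional, hgx, s, h]⟩
      · exact ⟨y, hy, by simp [mem_fractional, hgy, s, h]⟩

theorem exists_fractional_ssubset {A : Matrix V V ℝ} (hA : ∀ x y, 0 ≤ A x y)
    (hdiag : ∀ x, A x x = 0) {f : V → ℝ} (hf : ∀ x, f x ∈ Set.Icc 0 1) {k : ℕ}
    (hsum : ∑ x, f x = k) (hfrac : (fractional f).Nonempty) :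
    ∃ g : V → ℝ, (∀ z, g z ∈ Set.Icc 0 1) ∧ ∑ z, g z = ∑ z, f z ∧
      g ⬝ᵥ A *ᵥ g ≤ f ⬝ᵥ A *ᵥ f ∧ fractional g ⊂ fractional f := by
  classical
  obtain ⟨x, hx⟩ := hfrac
  obtain ⟨y, hy, hyx⟩ := exists_ne_mem_fractional hsum (hf x) hx
  rcases le_total (f ⬝ᵥ A *ᵥ (Pi.single x 1 - Pi.single y 1) +
      (Pi.single x 1 - Pi.single y 1 : V → ℝ) ⬝ᵥ A *ᵥ f) 0 with hB | hB
  · exact exists_fractional_ssubset_of_shift hA hdiag hf hx hy hyx hB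
  · refine exists_fractional_ssubset_of_shift hA hdiag hf hy hx hyx.symm ?_
    rw [← neg_sub, Matrix.mulVec_neg, dotProduct_neg, neg_dotProduct]
    linarith

theorem sum_sum_eq_dotProduct_mulVec_of_fractional_eq_empty {f : V → ℝ} (A : Matrix V V ℝ)
    (hf : fractional f = ∅) :
    ∑ x with f x = 1, ∑ y with f y = 1, A x y = f ⬝ᵥ A *ᵥ f := by
  have hind : f = fun x ↦ if f x = 1 then 1 else 0 := by
    ext x
    rcases eq_zero_or_eq_one_of_fractional_eq_empty hf x with hx | hx <;> simp [hx]
  conv_rhs => rw [hind]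
  simp [dotProduct, Matrix.mulVec, Finset.sum_filter]

theorem exists_card_eq_sum_sum_le {A : Matrix V V ℝ} (hA : ∀ x y, 0 ≤ A x y)
    (hdiag : ∀ x, A x x = 0) {f : V → ℝ} (hf : ∀ x, f x ∈ Set.Icc 0 1) {k : ℕ}
    (hsum : ∑ x, f x = k) :
    ∃ S : Finset V, S.card = k ∧ ∑ x ∈ S, ∑ y ∈ S, A x y ≤ f ⬝ᵥ A *ᵥ f := by
  induction hF : fractional f using Finset.strongInduction generalizing f with
  | H F ih =>
    rcases (fractional f).eq_empty_or_nonempty with h | h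
    · refine ⟨Finset.univ.filter fun x ↦ f x = 1, ?_,
        (sum_sum_eq_dotProduct_mulVec_of_fractional_eq_empty A h).le⟩
      have hcard : ((Finset.univ.filter fun x ↦ f x = 1).card : ℝ) = k := by
        rw [← hsum, Finset.card_filter, Nat.cast_sum]
        refine Finset.sum_congr rfl fun x _ ↦ ?_
        rcases eq_zero_or_eq_one_of_fractional_eq_empty h x with hx | hx <;> simp [hx]
      exact_mod_cast hcard
    · obtain ⟨g, hg, hgsum, hgf, hss⟩ := exists_fractional_ssubset hA hdiag hf hsum h
      obtain ⟨S, hS, hSg⟩ := ih _ (hF ▸ hss) hg (hgsum.trans hsum) rfl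
      exact ⟨S, hS, hSg.trans hgf⟩

end Rounding

/-! ### Edge densities -/

section AdjMatrix

variable {V : Type*} (G : SimpleGraph V) [DecidableRel G.Adj]

theorem adjMatrix_nonneg (x y : V) : 0 ≤ G.adjMatrix ℝ x y := by
  rw [G.adjMatrix_apply]; split_ifs <;> norm_num

theorem adjMatrix_le_one (x y : V) : G.adjMatrix ℝ x y ≤ 1 := by
  rw [G.adjMatrix_apply]; split_ifs <;> norm_num

theorem adjMatrix_comm (x y : V) : G.adjMatrix ℝ x y = G.adjMatrix ℝ y x := by
  simp only [G.adjMatrix_apply, G.adj_comm]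

end AdjMatrix

section Indicator

open Function

theorem sum_smul_indicator_mem_Icc {V ι : Type*} [Fintype ι] {A : ι → Finset V} {w : ι → ℝ}
    (hA : Pairwise (Disjoint on A)) (hw : ∀ i, w i ∈ Set.Icc 0 1) (x : V) :
    (∑ i, w i • (A i : Set V).indicator (1 : V → ℝ)) x ∈ Set.Icc 0 1 := by
  rw [Finset.sum_apply]
  by_cases hx : ∃ i, x ∈ A i
  · obtain ⟨i, hi⟩ := hx
    rw [Finset.sum_eq_single i (fun j _ hji ↦ ?_) (by simp)]
    · simpa [hi] using hw i
    · simp [Finset.disjoint_left.1 (hA hji.symm) hi]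
  · push Not at hx
    simp [hx]

theorem indicator_dotProduct_mulVec_indicator {V : Type*} [Fintype V] (S T : Finset V)
    (M : Matrix V V ℝ) :
    (S : Set V).indicator 1 ⬝ᵥ M *ᵥ (T : Set V).indicator 1 = ∑ x ∈ S, ∑ y ∈ T, M x y := by
  classical
  simp [dotProduct, Matrix.mulVec, Set.indicator_apply]

end Indicator

section Measure

variable {V : Type*} [Fintype V]

/-- The normalised counting measure of a vertex set. -/
noncomputable def mass (S : Finset V) : ℝ := S.card / Fintype.card V

/-- The integral of `f` over `S` with respect to the normalised counting measure `mass`. -/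
noncomputable def integral (S : Finset V) (f : V → ℝ) : ℝ := (∑ x ∈ S, f x) / Fintype.card V

theorem mass_nonneg (S : Finset V) : 0 ≤ mass S := by unfold mass; positivity

theorem mass_pos {S : Finset V} : 0 < mass S ↔ S.Nonempty := by
  refine ⟨fun h ↦ ?_, fun h ↦ ?_⟩
  · by_contra hS
    simp [mass, Finset.not_nonempty_iff_eq_empty.1 hS] at h
  · have : Nonempty V := ⟨h.choose⟩
    exact div_pos (mod_cast h.card_pos) (mod_cast Fintype.card_pos)

theorem mass_univ [Nonempty V] : mass (Finset.univ : Finset V) = 1 := by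
  simp [mass]

theorem mass_union [DecidableEq V] {S T : Finset V} (h : Disjoint S T) :
    mass (S ∪ T) = mass S + mass T := by
  simp [mass, Finset.card_union_of_disjoint h, add_div]

theorem mass_add_mass_sdiff [DecidableEq V] {S T : Finset V} (h : S ⊆ T) :
    mass S + mass (T \ S) = mass T := by
  rw [← mass_union Finset.disjoint_sdiff, Finset.union_sdiff_of_subset h]

theorem mass_compl [DecidableEq V] [Nonempty V] (S : Finset V) : mass Sᶜ = 1 - mass S := by
  rw [eq_sub_iff_add_eq', ← mass_union disjoint_compl_right, Finset.union_compl, mass_univ]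

section Integral

variable {S T : Finset V} {f g : V → ℝ}

theorem integral_congr (h : ∀ x ∈ S, f x = g x) : integral S f = integral S g := by
  rw [integral, Finset.sum_congr rfl h, integral]

theorem integral_mono (h : ∀ x ∈ S, f x ≤ g x) : integral S f ≤ integral S g :=
  div_le_div_of_nonneg_right (Finset.sum_le_sum h) (Nat.cast_nonneg _)

theorem integral_nonneg (h : ∀ x ∈ S, 0 ≤ f x) : 0 ≤ integral S f :=
  div_nonneg (Finset.sum_nonneg h) (Nat.cast_nonneg _)

theorem integral_mono_set (hST : S ⊆ T) (hf : ∀ x ∈ T, 0 ≤ f x) : integral S f ≤ integral T f :=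
  div_le_div_of_nonneg_right
    (Finset.sum_le_sum_of_subset_of_nonneg hST fun x hx _ ↦ hf x hx) (Nat.cast_nonneg _)

theorem integral_const (S : Finset V) (c : ℝ) : integral S (fun _ ↦ c) = mass S * c := by
  simp [integral, mass, div_mul_eq_mul_div]

theorem integral_add (S : Finset V) (f g : V → ℝ) :
    integral S (fun x ↦ f x + g x) = integral S f + integral S g := by
  simp only [integral, Finset.sum_add_distrib, add_div]

theorem integral_sub (S : Finset V) (f g : V → ℝ) :
    integral S (fun x ↦ f x - g x) = integral S f - integral S g := by
  simp only [integral, Finset.sum_sub_distrib, sub_div]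

theorem integral_const_mul (S : Finset V) (c : ℝ) (f : V → ℝ) :
    integral S (fun x ↦ c * f x) = c * integral S f := by
  simp only [integral, ← Finset.mul_sum, mul_div_assoc]

theorem integral_union [DecidableEq V] (h : Disjoint S T) (f : V → ℝ) :
    integral (S ∪ T) f = integral S f + integral T f := by
  rw [integral, Finset.sum_union h, add_div, integral, integral]

theorem integral_comm (S T : Finset V) (f : V → V → ℝ) :
    integral S (fun x ↦ integral T (f x)) = integral T fun y ↦ integral S fun x ↦ f x y := by
  simp only [integral, ← Finset.sum_div]
  rw [Finset.sum_comm]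

theorem integral_le_mass_mul {c : ℝ} (h : ∀ x ∈ S, f x ≤ c) : integral S f ≤ mass S * c :=
  (integral_mono h).trans_eq (integral_const S c)

theorem integral_lt_mass_mul {c : ℝ} (hS : S.Nonempty) (h : ∀ x ∈ S, f x < c) :
    integral S f < mass S * c := by
  have : Nonempty V := ⟨hS.choose⟩
  rw [← integral_const]
  exact div_lt_div_of_pos_right (Finset.sum_lt_sum_of_nonempty hS h) (mod_cast Fintype.card_pos)

theorem integral_pos (hS : S.Nonempty) (h : ∀ x ∈ S, 0 < f x) : 0 < integral S f := by
  have : Nonempty V := ⟨hS.choose⟩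
  exact div_pos (Finset.sum_pos h hS) (mod_cast Fintype.card_pos)

theorem exists_le_of_mass_mul_le_integral {c : ℝ} (hS : S.Nonempty)
    (h : mass S * c ≤ integral S f) : ∃ x ∈ S, c ≤ f x := by
  by_contra! hlt
  exact (integral_lt_mass_mul hS hlt).not_ge h

theorem sq_integral_le (S : Finset V) (f : V → ℝ) :
    integral S f ^ 2 ≤ mass S * integral S (fun x ↦ f x ^ 2) := by
  unfold integral mass
  rw [div_pow, div_mul_div_comm, ← sq]
  gcongr
  exact sq_sum_le_card_mul_sum_sq

end Integral

variable (G : SimpleGraph V) [DecidableRel G.Adj]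

/-- The normalised number of neighbours of `x` in `T`. -/
noncomputable def relDegree (x : V) (T : Finset V) : ℝ := integral T fun y ↦ G.adjMatrix ℝ x y

/-- The normalised number of ordered pairs of adjacent vertices in `S × T`. -/
noncomputable def edgeMass (S T : Finset V) : ℝ := integral S fun x ↦ relDegree G x T

theorem relDegree_nonneg (x : V) (T : Finset V) : 0 ≤ relDegree G x T :=
  integral_nonneg fun y _ ↦ adjMatrix_nonneg G x y

theorem relDegree_le_mass (x : V) (T : Finset V) : relDegree G x T ≤ mass T :=
  (integral_le_mass_mul fun y _ ↦ adjMatrix_le_one G x y).trans_eq (mul_one _)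

theorem relDegree_mono (x : V) {S T : Finset V} (h : S ⊆ T) :
    relDegree G x S ≤ relDegree G x T :=
  integral_mono_set h fun y _ ↦ adjMatrix_nonneg G x y

theorem relDegree_eq_mass_filter (x : V) (T : Finset V) :
    relDegree G x T = mass (T.filter (G.Adj x)) := by
  simp [relDegree, integral, mass]

theorem edgeMass_nonneg (S T : Finset V) : 0 ≤ edgeMass G S T :=
  integral_nonneg fun x _ ↦ relDegree_nonneg G x T

theorem edgeMass_comm (S T : Finset V) : edgeMass G S T = edgeMass G T S := by
  simp only [edgeMass, relDegree]
  rw [integral_comm]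
  simp only [adjMatrix_comm G]

theorem edgeMass_union_left [DecidableEq V] {S T : Finset V} (h : Disjoint S T) (U : Finset V) :
    edgeMass G (S ∪ T) U = edgeMass G S U + edgeMass G T U :=
  integral_union h _

theorem edgeMass_union_right [DecidableEq V] {S T : Finset V} (h : Disjoint S T) (U : Finset V) :
    edgeMass G U (S ∪ T) = edgeMass G U S + edgeMass G U T := by
  rw [edgeMass_comm, edgeMass_union_left G h, edgeMass_comm G S, edgeMass_comm G T]

theorem edgeMass_union_self [DecidableEq V] {S T : Finset V} (h : Disjoint S T) :
    edgeMass G (S ∪ T) (S ∪ T) = edgeMass G S S + edgeMass G T T + 2 * edgeMass G S T := by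
  rw [edgeMass_union_left G h, edgeMass_union_right G h, edgeMass_union_right G h,
    edgeMass_comm G T S]
  ring

theorem edgeMass_le_mul (S T : Finset V) : edgeMass G S T ≤ mass S * mass T :=
  integral_le_mass_mul fun x _ ↦ relDegree_le_mass G x T

theorem edgeMass_mono_left {S T : Finset V} (h : S ⊆ T) (U : Finset V) :
    edgeMass G S U ≤ edgeMass G T U :=
  integral_mono_set h fun x _ ↦ relDegree_nonneg G x U

theorem integral_integral_adjMatrix_mul (S T : Finset V) (f : V → ℝ) :
    integral S (fun x ↦ integral T fun y ↦ G.adjMatrix ℝ x y * f y) =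
      integral T fun y ↦ f y * relDegree G y S := by
  rw [integral_comm]
  refine integral_congr fun y _ ↦ ?_
  rw [relDegree, ← integral_const_mul]
  exact integral_congr fun x _ ↦ by rw [adjMatrix_comm, mul_comm]

theorem sum_sum_adjMatrix_eq (S T : Finset V) :
    ∑ x ∈ S, ∑ y ∈ T, G.adjMatrix ℝ x y = Fintype.card V ^ 2 * edgeMass G S T := by
  rcases isEmpty_or_nonempty V with hV | hV
  · simp [Finset.eq_empty_of_isEmpty S]
  · simp only [edgeMass, relDegree, integral, ← Finset.sum_div]
    field_simp

open Classical in
theorem two_mul_card_filter_edgeFinset (S : Finset V) :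
    2 * ((G.edgeFinset.filter fun e ↦ ∀ v ∈ e, v ∈ S).card : ℝ) =
      ∑ x ∈ S, ∑ y ∈ S, G.adjMatrix ℝ x y := by
  set H := (G.induce (S : Set V)).spanningCoe
  have hadj : ∀ x y, H.Adj x y ↔ (x ∈ S ∧ y ∈ S) ∧ G.Adj x y := fun x y ↦ by
    simp [H, and_assoc, and_comm, and_left_comm]
  have hedges : G.edgeFinset.filter (fun e ↦ ∀ v ∈ e, v ∈ S) = H.edgeFinset := by
    ext e
    induction e using Sym2.ind with
    | _ x y => simp [hadj, SimpleGraph.mem_edgeFinset, and_comm]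
  have hpairs : (Finset.univ.filter fun (x, y) ↦ H.Adj x y) =
      (S ×ˢ S).filter fun p ↦ G.Adj p.1 p.2 := by
    ext ⟨x, y⟩
    simp [hadj]
  have hcard := H.two_mul_card_edgeFinset
  rw [hpairs] at hcard
  rw [hedges, ← Finset.sum_product' S S fun x y ↦ G.adjMatrix ℝ x y]
  simp only [G.adjMatrix_apply, Finset.sum_boole]
  exact_mod_cast hcard

/-- Every fractional vertex set of half the total weight spans more than `n ^ 2 / 18` edges,
counted with weights; the quadratic form of the adjacency matrix counts each edge twice. -/
def Dense : Prop :=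
  ∀ f : V → ℝ, (∀ x, f x ∈ Set.Icc 0 1) → ∑ x, f x = Fintype.card V / 2 →
    (Fintype.card V : ℝ) ^ 2 / 9 < f ⬝ᵥ G.adjMatrix ℝ *ᵥ f

end Measure

namespace Dense

open Function

variable {V : Type*} [Fintype V] {G : SimpleGraph V} [DecidableRel G.Adj]

theorem lt_sum_sum (h : Dense G) {ι : Type*} [Fintype ι] {A : ι → Finset V} {w : ι → ℝ}
    (hA : Pairwise (Disjoint on A)) (hw : ∀ i, w i ∈ Set.Icc 0 1)
    (hmass : ∑ i, w i * mass (A i) = 1 / 2) :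
    1 / 9 < ∑ i, ∑ j, w i * w j * edgeMass G (A i) (A j) := by
  classical
  have hV : (Fintype.card V : ℝ) ≠ 0 := fun hV ↦ by simp [mass, hV] at hmass
  set f : V → ℝ := ∑ i, w i • (A i : Set V).indicator 1 with hf
  have hsum : ∑ x, f x = (Fintype.card V : ℝ) / 2 := by
    simp only [hf, Finset.sum_apply]
    rw [Finset.sum_comm, div_eq_mul_one_div, ← hmass, Finset.mul_sum]
    refine Finset.sum_congr rfl fun i _ ↦ ?_
    simp [Set.indicator_apply, mass]
    field_simp
  have hform : f ⬝ᵥ G.adjMatrix ℝ *ᵥ f =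
      (Fintype.card V : ℝ) ^ 2 * ∑ i, ∑ j, w i * w j * edgeMass G (A i) (A j) := by
    simp only [hf, Matrix.mulVec_sum, dotProduct_sum, sum_dotProduct, Matrix.mulVec_smul,
      dotProduct_smul, smul_dotProduct, indicator_dotProduct_mulVec_indicator,
      sum_sum_adjMatrix_eq, smul_eq_mul, Finset.mul_sum]
    rw [Finset.sum_comm]
    exact Finset.sum_congr rfl fun i _ ↦ Finset.sum_congr rfl fun j _ ↦ by ring
  have := h f (sum_smul_indicator_mem_Icc hA hw) hsum
  rw [hform, div_eq_mul_one_div] at this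
  exact lt_of_mul_lt_mul_left this (by positivity)

theorem lt_of_disjoint (h : Dense G) {A B : Finset V} {α β : ℝ} (hAB : Disjoint A B)
    (hα : α ∈ Set.Icc 0 1) (hβ : β ∈ Set.Icc 0 1) (hmass : α * mass A + β * mass B = 1 / 2) :
    1 / 9 < α ^ 2 * edgeMass G A A + β ^ 2 * edgeMass G B B + 2 * α * β * edgeMass G A B := by
  have := h.lt_sum_sum (A := ![A, B]) (w := ![α, β])
    (by simp [Pairwise, Fin.forall_fin_two, onFun, hAB, hAB.symm])
    (by simpa [Fin.forall_fin_two] using ⟨hα, hβ⟩)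
    (by simpa using hmass)
  simp only [Fin.sum_univ_two, Matrix.cons_val_zero, Matrix.cons_val_one, edgeMass_comm G B A]
    at this
  linarith

theorem exists_mul_mass_eq_and_lt (h : Dense G) {A B : Finset V} (hAB : Disjoint A B)
    (hA : mass A ≤ 1 / 2) (hB : 1 / 2 ≤ mass A + mass B) :
    ∃ l ∈ Set.Icc (0 : ℝ) 1, l * mass B = 1 / 2 - mass A ∧
      1 / 9 < edgeMass G A A + l ^ 2 * edgeMass G B B + 2 * l * edgeMass G A B := by
  have hl : (1 / 2 - mass A) / mass B ∈ Set.Icc (0 : ℝ) 1 :=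
    ⟨div_nonneg (by linarith) (mass_nonneg B), div_le_one_of_le₀ (by linarith) (mass_nonneg B)⟩
  have hmass : (1 / 2 - mass A) / mass B * mass B = 1 / 2 - mass A :=
    div_mul_cancel_of_imp fun hB₀ ↦ by linarith
  have := h.lt_of_disjoint (α := 1) hAB (by simp) hl (by linarith)
  exact ⟨_, hl, hmass, by linarith⟩

theorem mul_sq_mass_lt_edgeMass (h : Dense G) {A : Finset V} (hA : 1 / 2 ≤ mass A) :
    4 / 9 * mass A ^ 2 < edgeMass G A A := by
  have hA₀ : 0 < mass A := by linarith
  have := h.lt_of_disjoint (A := A) (B := ∅) (α := 1 / 2 / mass A) (β := 0) (by simp)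
    ⟨by positivity, (div_le_one hA₀).2 hA⟩ (by simp) (by simp [hA₀.ne'])
  rw [div_pow, div_mul_eq_mul_div] at this
  simp only [ne_eq, OfNat.ofNat_ne_zero, not_false_eq_true, zero_pow, zero_mul, mul_zero,
    add_zero] at this
  rw [lt_div_iff₀ (by positivity)] at this
  linarith

end Dense

section TriangleFree

variable {V : Type*} {G : SimpleGraph V} {N : Set V}

theorem not_adj_of_cliqueFreeOn_three (h : G.CliqueFreeOn N 3) {x y z : V} (hx : x ∈ N)
    (hy : y ∈ N) (hz : z ∈ N) (hxy : G.Adj x y) (hxz : G.Adj x z) : ¬G.Adj y z := by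
  classical
  exact fun hyz ↦ h (t := {x, y, z}) (by simp [Set.insert_subset_iff, hx, hy, hz])
    (SimpleGraph.is3Clique_triple_iff.2 ⟨hxy, hxz, hyz⟩)

variable [DecidableRel G.Adj]

theorem adjMatrix_add_adjMatrix_le_one (h : G.CliqueFreeOn N 3) {x y z : V} (hx : x ∈ N)
    (hy : y ∈ N) (hz : z ∈ N) (hxy : G.Adj x y) :
    G.adjMatrix ℝ x z + G.adjMatrix ℝ y z ≤ 1 := by
  have := not_adj_of_cliqueFreeOn_three h hx hy hz hxy
  simp only [G.adjMatrix_apply]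
  split_ifs <;> first | tauto | norm_num

theorem adjMatrix_le_one_sub_mul (h : G.CliqueFreeOn N 3) {x y z : V} (hx : x ∈ N)
    (hy : y ∈ N) (hz : z ∈ N) :
    G.adjMatrix ℝ x y ≤ 1 - G.adjMatrix ℝ z x * G.adjMatrix ℝ z y := by
  have := not_adj_of_cliqueFreeOn_three h hz hx hy
  simp only [G.adjMatrix_apply]
  split_ifs <;> first | tauto | norm_num

variable [Fintype V]

theorem relDegree_add_relDegree_le (h : G.CliqueFreeOn N 3) {x y : V} (hx : x ∈ N) (hy : y ∈ N)
    (hxy : G.Adj x y) {T : Finset V} (hT : ↑T ⊆ N) :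
    relDegree G x T + relDegree G y T ≤ mass T := by
  rw [relDegree, relDegree, ← integral_add, ← mul_one (mass T)]
  exact integral_le_mass_mul fun z hz ↦ adjMatrix_add_adjMatrix_le_one h hx hy (hT hz) hxy

theorem edgeMass_le_mul_sub_mul (h : G.CliqueFreeOn N 3) {z : V} (hz : z ∈ N) {P R : Finset V}
    (hP : ↑P ⊆ N) (hR : ↑R ⊆ N) :
    edgeMass G P R ≤ mass P * mass R - relDegree G z P * relDegree G z R := by
  have hdeg : ∀ x ∈ P, relDegree G x R ≤ mass R - relDegree G z R * G.adjMatrix ℝ z x := by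
    intro x hx
    refine (integral_mono fun y hy ↦ adjMatrix_le_one_sub_mul h (hP hx) (hR hy) hz).trans_eq ?_
    rw [integral_sub, integral_const, integral_const_mul, ← relDegree]
    ring
  refine (integral_mono hdeg).trans_eq ?_
  rw [integral_sub, integral_const, integral_const_mul, ← relDegree]
  ring

theorem edgeMass_eq_zero {P R : Finset V} (h : ∀ x ∈ P, ∀ y ∈ R, ¬G.Adj x y) :
    edgeMass G P R = 0 := by
  have hrow : ∀ x ∈ P, relDegree G x R = 0 := fun x hx ↦ by
    rw [relDegree, integral_congr (g := fun _ ↦ 0) fun y hy ↦ by simp [h x hx y hy]]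
    simp [integral]
  rw [edgeMass, integral_congr hrow]
  simp [integral]

theorem edgeMass_filter_left (u : V) (S T : Finset V) :
    edgeMass G (S.filter (G.Adj u)) T = integral S fun x ↦ G.adjMatrix ℝ u x * relDegree G x T := by
  simp only [edgeMass, integral, Finset.sum_filter, G.adjMatrix_apply, ite_mul, one_mul, zero_mul]

theorem edgeMass_filter_adj_self (h : G.CliqueFreeOn N 3) {u : V} (hu : u ∈ N) {S : Finset V}
    (hS : ↑S ⊆ N) : edgeMass G (S.filter (G.Adj u)) (S.filter (G.Adj u)) = 0 :=
  edgeMass_eq_zero fun x hx y hy ↦ by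
    rw [Finset.mem_filter] at hx hy
    exact not_adj_of_cliqueFreeOn_three h hu (hS hx.1) (hS hy.1) hx.2 hy.2

theorem two_mul_integral_sq_relDegree_le (h : G.CliqueFreeOn N 3) {Z : Finset V} (hZ : ↑Z ⊆ N) :
    2 * integral Z (fun x ↦ relDegree G x Z ^ 2) ≤ mass Z * edgeMass G Z Z := by
  have hpair : ∀ x ∈ Z, ∀ y ∈ Z, G.adjMatrix ℝ x y * relDegree G y Z ≤
      (mass Z - relDegree G x Z) * G.adjMatrix ℝ x y := by
    intro x hx y hy
    by_cases hxy : G.Adj x y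
    · simpa [hxy, le_sub_iff_add_le'] using
        relDegree_add_relDegree_le h (hZ hx) (hZ hy) hxy hZ
    · simp [hxy]
  have hrow : ∀ x ∈ Z, integral Z (fun y ↦ G.adjMatrix ℝ x y * relDegree G y Z) ≤
      mass Z * relDegree G x Z - relDegree G x Z ^ 2 := fun x hx ↦ by
    refine (integral_mono (hpair x hx)).trans_eq ?_
    rw [integral_const_mul, ← relDegree]
    ring
  have hsum := integral_mono hrow
  rw [integral_integral_adjMatrix_mul, integral_sub, integral_const_mul, ← edgeMass] at hsum
  simp only [← sq] at hsum
  linarith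

theorem two_mul_edgeMass_self_le (h : G.CliqueFreeOn N 3) {Z : Finset V} (hZ : ↑Z ⊆ N) :
    2 * edgeMass G Z Z ≤ mass Z ^ 2 := by
  have hsq := two_mul_integral_sq_relDegree_le h hZ
  have hcs : edgeMass G Z Z ^ 2 ≤ _ := sq_integral_le Z fun x ↦ relDegree G x Z
  rcases (edgeMass_nonneg G Z Z).eq_or_lt with h₀ | h₀
  · rw [← h₀]; linarith [sq_nonneg (mass Z)]
  · refine le_of_mul_le_mul_right ?_ h₀
    linarith [mul_le_mul_of_nonneg_left hsq (mass_nonneg Z)]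

theorem edgeMass_self_eq_of_subset [DecidableEq V] {S T : Finset V} (h : S ⊆ T) :
    edgeMass G T T = edgeMass G S S + edgeMass G (T \ S) (T \ S) + 2 * edgeMass G S (T \ S) := by
  rw [← edgeMass_union_self G Finset.disjoint_sdiff, Finset.union_sdiff_of_subset h]

/-- Average over `u ∈ N` the cut between `N(u) ∩ N`, which is independent, and the rest of `N`. -/
theorem exists_edgeMass_self_eq_zero_and_sq_le [DecidableEq V] {N : Finset V}
    (h : G.CliqueFreeOn ↑N 3) (hN : N.Nonempty) :
    ∃ S ⊆ N, edgeMass G S S = 0 ∧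
      edgeMass G N N ^ 2 ≤ mass N ^ 2 * edgeMass G S (N \ S) := by
  have hm : 0 < mass N := mass_pos.2 hN
  have hcs : edgeMass G N N ^ 2 ≤ _ := sq_integral_le N fun x ↦ relDegree G x N
  have havg : integral N (fun u ↦ edgeMass G (N.filter (G.Adj u)) N) =
      integral N fun x ↦ relDegree G x N ^ 2 := by
    simp only [edgeMass_filter_left, integral_integral_adjMatrix_mul, sq]
  obtain ⟨u, hu, hge⟩ : ∃ u ∈ N,
      edgeMass G N N ^ 2 / mass N ^ 2 ≤ edgeMass G (N.filter (G.Adj u)) N := by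
    refine exists_le_of_mass_mul_le_integral hN ?_
    rw [havg, sq (mass N), ← div_div, mul_div_cancel₀ _ hm.ne', div_le_iff₀' hm]
    exact hcs
  have hSN : N.filter (G.Adj u) ⊆ N := Finset.filter_subset _ _
  have hS := edgeMass_filter_adj_self h hu subset_rfl
  refine ⟨N.filter (G.Adj u), hSN, hS, ?_⟩
  have hsplit := edgeMass_union_right G (Finset.disjoint_sdiff (s := N.filter (G.Adj u)) (t := N))
    (N.filter (G.Adj u))
  rw [Finset.union_sdiff_of_subset hSN, hS, zero_add] at hsplit
  rwa [← hsplit, ← div_le_iff₀' (by positivity)]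

end TriangleFree

/-! ### The mass of a maximum neighbourhood -/

section MajorityCut

variable {V : Type*} [Fintype V] {G : SimpleGraph V} [DecidableRel G.Adj] {d : ℝ}

theorem edgeMass_add_edgeMass_compl_le [DecidableEq V]
    (hdeg : ∀ x, relDegree G x Finset.univ ≤ d) (S T : Finset V) :
    edgeMass G S T + edgeMass G S Tᶜ ≤ mass S * d := by
  rw [← edgeMass_union_right G disjoint_compl_right, Finset.union_compl]
  exact integral_le_mass_mul fun x _ ↦ hdeg x

theorem cut_sub_lt_of_weighted_tests {b₁ b₂ m x₁ x₂ o σ : ℝ} (hd : 1 / 3 ≤ d) (hd' : d ≤ 2 / 3)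
    (hb₁ : 0 ≤ b₁) (hb₂ : 0 ≤ b₂) (hx₁ : 0 ≤ x₁) (hx₂ : 0 ≤ x₂) (hσ : |σ| ≤ 1 / 4)
    (hP : b₁ + m + x₁ ≤ (d / 2 + σ * (1 - d)) * d) (hR : m + b₂ + x₂ ≤ (d / 2 - σ * (1 - d)) * d)
    (hO : x₁ + x₂ + o ≤ (1 - d) * d)
    (hPO : 1 / 9 < b₁ + (1 / 2 - σ) ^ 2 * o + 2 * (1 / 2 - σ) * x₁)
    (hRO : 1 / 9 < b₂ + (1 / 2 + σ) ^ 2 * o + 2 * (1 / 2 + σ) * x₂) :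
    m - (b₁ + b₂) / 2 < d / 2 - 2 / 9 + 9 * ((b₁ + b₂) / 2) ^ 2 := by
  obtain ⟨hσ₁, hσ₂⟩ := abs_le.1 hσ
  have hlin : m - (b₁ + b₂) / 2 <
      d / 2 - 2 / 9 - 2 * σ ^ 2 * (d * (1 - d)) + 2 * σ * (b₁ - b₂) := by
    have := mul_le_mul_of_nonneg_left hP (show 0 ≤ 1 / 2 - 2 * σ by linarith)
    have := mul_le_mul_of_nonneg_left hR (show 0 ≤ 1 / 2 + 2 * σ by linarith)
    have := mul_le_mul_of_nonneg_left hO (show 0 ≤ 2 * σ ^ 2 by positivity)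
    have : 0 ≤ 2 * σ ^ 2 * x₁ := by positivity
    have : 0 ≤ 2 * σ ^ 2 * x₂ := by positivity
    linarith
  have hdd : 2 / 9 ≤ d * (1 - d) := by
    linarith [mul_nonneg (sub_nonneg.2 hd) (sub_nonneg.2 hd')]
  have hquad : 2 * σ * (b₁ - b₂) - 4 / 9 * σ ^ 2 ≤ 9 * ((b₁ + b₂) / 2) ^ 2 := by
    linarith [mul_nonneg hb₁ hb₂, sq_nonneg (2 / 3 * σ - 3 / 2 * (b₁ - b₂))]
  linarith [mul_le_mul_of_nonneg_left hdd (show 0 ≤ 2 * σ ^ 2 by positivity)]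

/-- Each of `P` and `R`, completed to half of the total mass by a constant weight on the other
vertices, is a test set for `Dense`. -/
theorem Dense.edgeMass_sub_lt [Nonempty V] (h : Dense G)
    (hdeg : ∀ x, relDegree G x Finset.univ ≤ d) {P R : Finset V} (hPR : Disjoint P R)
    (hsum : mass P + mass R = d) (hd : 1 / 3 ≤ d) (hd' : d ≤ 2 / 3)
    (hbal : 2 * |mass P - mass R| ≤ 1 - d) :
    edgeMass G P R - (edgeMass G P P + edgeMass G R R) / 2 <
      d / 2 - 2 / 9 + 9 * ((edgeMass G P P + edgeMass G R R) / 2) ^ 2 := by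
  classical
  set O := (P ∪ R)ᶜ
  have hPO : Disjoint P O := disjoint_compl_right.mono_left Finset.subset_union_left
  have hRO : Disjoint R O := disjoint_compl_right.mono_left Finset.subset_union_right
  have hO : mass O = 1 - d := by rw [mass_compl, mass_union hPR, hsum]
  have hsplit (S : Finset V) : edgeMass G S P + edgeMass G S R + edgeMass G S O ≤ mass S * d := by
    rw [← edgeMass_union_right G hPR]
    exact edgeMass_add_edgeMass_compl_le hdeg S _
  have hd₁ : 0 < 1 - d := by linarith
  set σ := (mass P - mass R) / 2 / (1 - d)
  have hσ : σ * (1 - d) = (mass P - mass R) / 2 := div_mul_cancel₀ _ hd₁.ne'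
  have hσ_le : |σ| ≤ 1 / 4 := by
    rw [abs_div, abs_div, abs_two, abs_of_pos hd₁, div_le_iff₀ hd₁]
    linarith
  obtain ⟨hσ₁, hσ₂⟩ := abs_le.1 hσ_le
  have htestP := h.lt_of_disjoint (α := 1) (β := 1 / 2 - σ) hPO (by simp)
    ⟨by linarith, by linarith⟩ (by rw [hO]; linarith)
  have htestR := h.lt_of_disjoint (α := 1) (β := 1 / 2 + σ) hRO (by simp)
    ⟨by linarith, by linarith⟩ (by rw [hO]; linarith)
  have hP := hsplit P
  have hR := hsplit R
  have hOO := hsplit O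
  rw [show mass P = d / 2 + σ * (1 - d) by linarith] at hP
  rw [show mass R = d / 2 - σ * (1 - d) by linarith, edgeMass_comm G R P] at hR
  rw [hO, edgeMass_comm G O P, edgeMass_comm G O R] at hOO
  exact cut_sub_lt_of_weighted_tests hd hd' (edgeMass_nonneg G P P) (edgeMass_nonneg G R R)
    (edgeMass_nonneg G P O) (edgeMass_nonneg G R O) hσ_le hP hR hOO (by linarith) (by linarith)

end MajorityCut

section SmallDegree

variable {V : Type*} [Fintype V] {G : SimpleGraph V} [DecidableRel G.Adj] {d : ℝ}

theorem Dense.lt_of_relDegree_le [Nonempty V] (h : Dense G)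
    (hdeg : ∀ x, relDegree G x Finset.univ ≤ d) : 4 / 9 < d := by
  have hlow := h.mul_sq_mass_lt_edgeMass (A := Finset.univ) (by rw [mass_univ]; norm_num)
  have hup : edgeMass G Finset.univ Finset.univ ≤ mass (Finset.univ : Finset V) * d :=
    integral_le_mass_mul fun x _ ↦ hdeg x
  rw [mass_univ] at hlow hup
  linarith

theorem mul_sq_le_of_weighted_test {t : ℝ} (hd : 4 / 9 < d) (hd' : d < 1 / 2)
    (h : (1 - d) ^ 2 / 9 ≤ t / 4 + 2 * (1 / 2 - d) * (1 - d) * d ^ 2 +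
      (1 / 2 - d) ^ 2 * d * (1 - 2 * d)) :
    217 / 500 * d ^ 2 ≤ t := by
  obtain ⟨u, rfl⟩ : ∃ u, d = 4 / 9 + u := ⟨d - 4 / 9, by ring⟩
  have hu : 0 ≤ u := by linarith
  have hu' : 0 ≤ 1 / 18 - u := by linarith
  have h₁ := mul_nonneg hu hu'
  nlinarith [mul_nonneg hu h₁, mul_nonneg hu (mul_nonneg hu h₁), mul_nonneg hu' h₁,
    mul_nonneg hu' (mul_nonneg hu h₁)]

theorem Dense.mul_sq_le_edgeMass_of_lt [Nonempty V] (h : Dense G)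
    (hdeg : ∀ x, relDegree G x Finset.univ ≤ d) {N : Finset V} (hN : mass N = d)
    (hd : 4 / 9 < d) (hd' : d < 1 / 2) : 217 / 500 * d ^ 2 ≤ edgeMass G N N := by
  classical
  have hO : mass Nᶜ = 1 - d := by rw [mass_compl, hN]
  have hNN := edgeMass_add_edgeMass_compl_le hdeg N N
  have hON := edgeMass_add_edgeMass_compl_le hdeg Nᶜ N
  rw [hN] at hNN
  rw [hO, edgeMass_comm G Nᶜ N] at hON
  obtain ⟨l, ⟨hl₀, hl₁⟩, hl, htest⟩ := h.exists_mul_mass_eq_and_lt (disjoint_compl_right (a := N))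
    (by linarith) (by linarith)
  rw [hO, hN] at hl
  have hN' : 1 / 9 ≤ (1 - l) ^ 2 * edgeMass G N N + 2 * l * d ^ 2 + l ^ 2 * (d * (1 - 2 * d)) := by
    linarith [mul_le_mul_of_nonneg_left hNN (show 0 ≤ 2 * l - l ^ 2 by nlinarith),
      mul_le_mul_of_nonneg_left hON (sq_nonneg l)]
  refine mul_sq_le_of_weighted_test hd hd' ?_
  calc (1 - d) ^ 2 / 9 = (1 - d) ^ 2 * (1 / 9) := by ring
    _ ≤ (1 - d) ^ 2 * _ := mul_le_mul_of_nonneg_left hN' (sq_nonneg _)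
    _ = ((1 - d) - l * (1 - d)) ^ 2 * edgeMass G N N + 2 * (l * (1 - d)) * (1 - d) * d ^ 2 +
          (l * (1 - d)) ^ 2 * (d * (1 - 2 * d)) := by ring
    _ = _ := by rw [hl]; ring

theorem Dense.half_le_mass [Nonempty V] (h : Dense G) {N : Finset V}
    (hN₃ : G.CliqueFreeOn ↑N 3) (hdeg : ∀ x, relDegree G x Finset.univ ≤ mass N) :
    1 / 2 ≤ mass N := by
  classical
  by_contra! hd'
  have hd := h.lt_of_relDegree_le hdeg
  have hNN := h.mul_sq_le_edgeMass_of_lt hdeg rfl hd hd'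
  obtain ⟨S, hS, hS₀, hcut⟩ :=
    exists_edgeMass_self_eq_zero_and_sq_le hN₃ (mass_pos.1 (by linarith))
  have hmass := mass_add_mass_sdiff hS
  have hprod := edgeMass_le_mul G S (N \ S)
  have hsplit := edgeMass_self_eq_of_subset (G := G) hS
  have hb := edgeMass_nonneg G (N \ S) (N \ S)
  have hm : 217 / 500 * edgeMass G N N ≤ edgeMass G S (N \ S) := by
    refine le_of_mul_le_mul_left ?_ (show 0 < mass N ^ 2 by positivity)
    linarith [mul_le_mul_of_nonneg_right hNN (edgeMass_nonneg G N N)]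
  have hbal : |mass S - mass (N \ S)| ≤ (1 - mass N) / 2 := by
    refine abs_le_of_sq_le_sq ?_ (by linarith)
    have : (mass S - mass (N \ S)) ^ 2 = mass N ^ 2 - 4 * (mass S * mass (N \ S)) := by
      rw [← hmass]; ring
    nlinarith
  have hlt := h.edgeMass_sub_lt hdeg Finset.disjoint_sdiff hmass (by linarith) (by linarith)
    (by linarith)
  rw [hS₀] at hlt hsplit
  have hm_le : edgeMass G S (N \ S) ≤ 1 / 16 := by nlinarith [sq_nonneg (mass S - mass (N \ S))]
  have hb_le : edgeMass G (N \ S) (N \ S) / 2 ≤ 1 / 100 := by linarith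
  have : (edgeMass G (N \ S) (N \ S) / 2) ^ 2 ≤ 1 / 100 * (edgeMass G (N \ S) (N \ S) / 2) := by
    rw [sq]
    exact mul_le_mul_of_nonneg_right hb_le (by linarith)
  nlinarith

end SmallDegree

section LargeDegree

variable {V : Type*} [Fintype V] {G : SimpleGraph V} [DecidableRel G.Adj] {N : Finset V}

/-- Take for `S` the neighbourhood of a vertex of maximum degree in `N`. -/
theorem exists_edgeMass_self_eq_zero_and_forall_edgeMass_le (hN₃ : G.CliqueFreeOn ↑N 3)
    (hN : N.Nonempty) :
    ∃ S ⊆ N, edgeMass G S S = 0 ∧ ∀ T ⊆ N, edgeMass G T N ≤ mass T * mass S := by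
  obtain ⟨u, hu, hmax⟩ := N.exists_max_image (relDegree G · N) hN
  refine ⟨N.filter (G.Adj u), Finset.filter_subset _ _,
    edgeMass_filter_adj_self hN₃ hu subset_rfl, fun T hT ↦ ?_⟩
  rw [← relDegree_eq_mass_filter]
  exact integral_le_mass_mul fun x hx ↦ hmax x (hT hx)

theorem lt_one_third_of_weighted_test {c p b m l : ℝ} (hl₀ : 0 ≤ l) (hl₁ : l ≤ 1) (hb : 0 ≤ b)
    (hc : c < 1 / 2) (hl : l * p = 1 / 2 - c) (hp : b + m ≤ p * c)
    (htest : 1 / 9 < l ^ 2 * b + 2 * l * m) : c < 1 / 3 := by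
  have hsq : l ^ 2 * b ≤ l * b := mul_le_mul_of_nonneg_right (by nlinarith) hb
  have hcut : 1 / 9 < 2 * ((1 / 2 - c) * c) := by
    linarith [mul_le_mul_of_nonneg_left hp hl₀, mul_nonneg hl₀ hb,
      show l * (p * c) = (1 / 2 - c) * c by rw [← hl]; ring]
  nlinarith [hcut]

theorem mul_sub_sq_le_of_weighted_test {c p b m l : ℝ} (hl₀ : 0 ≤ l) (hb : 0 ≤ b)
    (hc : 8 / 27 < c) (hc' : c < 1 / 3) (hp : 1 / 3 < p)
    (hl : l * c = 1 / 2 - p) (hbm : b + m ≤ p * c) (htest : 1 / 9 < b + 2 * l * m) :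
    2 * (p * c) - 4 / 9 * (p + c) ^ 2 ≤ b := by
  have hcut : l * (p * c) = (1 / 2 - p) * p := by rw [← hl]; ring
  have hgap : 2 * ((p - 1 / 3) * (p - 1 / 6)) < b * (1 - 2 * l) := by
    linarith [mul_le_mul_of_nonneg_left hbm hl₀]
  have hgap_le : b * (1 - 2 * l) * c ≤ b * (2 * (p - 1 / 3)) := by
    linarith [mul_le_mul_of_nonneg_left
      (show (1 - 2 * l) * c ≤ 2 * (p - 1 / 3) by linarith) hb]
  have hb_lt : (p - 1 / 6) * c < b := by
    refine lt_of_mul_lt_mul_left ?_ (show 0 ≤ p - 1 / 3 by linarith)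
    linarith [mul_lt_mul_of_pos_right hgap (show 0 < c by linarith)]
  have : 0 ≤ (p - 1 / 3) * (8 / 3 - c) := mul_nonneg (by linarith) (by linarith)
  linarith [sq_nonneg (c - 11 / 48), sq_nonneg (p - 1 / 3)]

theorem Dense.mass_lt_two_thirds (h : Dense G) (hN₃ : G.CliqueFreeOn ↑N 3) : mass N < 2 / 3 := by
  classical
  by_contra! hd
  obtain ⟨S, hS, hS₀, hmax⟩ := exists_edgeMass_self_eq_zero_and_forall_edgeMass_le hN₃
    (mass_pos.1 (by linarith))
  set c := mass S
  set p := mass (N \ S)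
  set b := edgeMass G (N \ S) (N \ S)
  set m := edgeMass G S (N \ S)
  have hmass : c + p = mass N := mass_add_mass_sdiff hS
  have hb : 0 ≤ b := edgeMass_nonneg G _ _
  have hsplit : edgeMass G N N = b + 2 * m := by
    rw [edgeMass_self_eq_of_subset hS, hS₀, zero_add]
  have hNN := h.mul_sq_mass_lt_edgeMass (A := N) (by linarith)
  have hbm : b + m ≤ p * c := by
    have := hmax (N \ S) Finset.sdiff_subset
    rwa [← Finset.union_sdiff_of_subset hS, edgeMass_union_right G Finset.disjoint_sdiff,
      edgeMass_comm G _ S, Finset.union_sdiff_of_subset hS, add_comm] at this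
  have hc : 8 / 27 < c := by
    have := hmax N subset_rfl
    nlinarith
  have hc_half : c < 1 / 2 := by
    by_contra! hcS
    linarith [h.mul_sq_mass_lt_edgeMass hcS, sq_nonneg (mass S)]
  have hc_third : c < 1 / 3 := by
    obtain ⟨l, ⟨hl₀, hl₁⟩, hl, htest⟩ := h.exists_mul_mass_eq_and_lt
      (Finset.disjoint_sdiff (s := S) (t := N)) hc_half.le (by linarith)
    exact lt_one_third_of_weighted_test hl₀ hl₁ hb hc_half hl hbm (by linarith)
  have hb_lt : b < 2 * (p * c) - 4 / 9 * (p + c) ^ 2 := by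
    rw [hsplit, ← hmass] at hNN
    linarith
  rcases le_or_gt (1 / 2) p with hp | hp
  · have hb_gt : 4 / 9 * p ^ 2 < b := h.mul_sq_mass_lt_edgeMass hp
    nlinarith [sq_nonneg (p - c), sq_nonneg p]
  · obtain ⟨l, ⟨hl₀, -⟩, hl, htest⟩ := h.exists_mul_mass_eq_and_lt
      (Finset.sdiff_disjoint (s := S) (t := N)) hp.le (by linarith)
    rw [hS₀, edgeMass_comm G _ S] at htest
    exact hb_lt.not_ge (mul_sub_sq_le_of_weighted_test hl₀ hb hc hc_third (by linarith)
      hl hbm (by linarith))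

end LargeDegree

/-! ### Light vertices of a maximum cut -/

section LightProfile

theorem add_le_of_cut_le {d p r a b m : ℝ} (hd : 0 < d) (hp : 0 ≤ p) (hr : 0 ≤ r) (hpr : p + r = d)
    (ha : 0 ≤ a) (hm : 16 / 81 * d ^ 2 ≤ m) (hma : m ≤ p * r - a * r / 2)
    (hmb : m ≤ p * r - b * p / 2) : a + b ≤ 42 / 100 * d := by
  by_contra! hlt
  have hpa := mul_le_mul_of_nonneg_left hma hp
  have hrb := mul_le_mul_of_nonneg_left hmb hr
  have hab : (a + b) * (p * r) ≤ 2 * d * (p * r - m) := by rw [← hpr]; linarith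
  have hamgm : p * r ≤ d ^ 2 / 4 := by rw [← hpr]; linarith [sq_nonneg (p - r)]
  have hd2 : 0 < d ^ 2 := by positivity
  have hd3 : 0 < d ^ 3 := by positivity
  have hprod : 0 < p * r := by linarith [mul_nonneg ha hr]
  linarith [mul_lt_mul_of_pos_right hlt hprod, mul_le_mul_of_nonneg_left hm hd.le,
    mul_le_mul_of_nonneg_left hamgm hd.le]

theorem add_le_three_quarters_mul_of_cut_le {d p r b m : ℝ} (hd : 0 < d) (hp : 0 ≤ p)
    (hpr : p + r = d) (hm : 16 / 81 * d ^ 2 ≤ m) (hmb : m ≤ p * r - b * p / 2) :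
    p + b ≤ 3 / 4 * d := by
  by_contra! hlt
  have hd2 : 0 < d * d := by positivity
  obtain rfl : r = d - p := by linarith
  linarith [sq_nonneg (p - 5 / 8 * d), mul_le_mul_of_nonneg_left hlt.le hp]

theorem add_lt_of_sq_add_mul_le {d z k x y : ℝ} (hd : 1 / 2 ≤ d) (hz : 0 ≤ z)
    (hzd : 10 * z ≤ 3 * d) (hk : 0 ≤ k) (hx : x ≤ d / 4 + k / 2)
    (hy : y ≤ d / 4 + k / 2)
    (hM : 3 / 4 * k ^ 2 + z * (d - z) / 4 + x * y ≤ 17 / 324 * d ^ 2) : x + y < (d - z) / 2 := by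
  by_contra! hle
  have hxy := mul_nonneg (sub_nonneg.2 hx) (sub_nonneg.2 hy)
  have hsum := mul_le_mul_of_nonneg_left hle (show 0 ≤ d / 4 + k / 2 by linarith)
  have hd2 : 0 < d * d := by positivity
  linarith [sq_nonneg (k - z / 4), mul_nonneg hz (sub_nonneg.2 hzd),
    mul_nonneg hz (show 0 ≤ d by linarith)]

variable {V : Type*} [Fintype V]

/-- The numerical data of a maximum cut `P ∪ R` of a triangle-free set of mass `d`. The sides have
masses `d / 2 ± κ`; their light parts, with union `Z`, have masses `ζ / 2 ± s`. For `z ∈ Z` the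
numbers `X z ≤ Y z` are the relative degrees of `z` into the two heavy parts and `H z` bounds both
of them, `m` is the edge mass between the heavy parts, and `e` is half the edge mass inside `Z`. -/
structure LightProfile (Z : Finset V) (X Y H : V → ℝ) (d ζ κ s m e : ℝ) : Prop where
  half_le : 1 / 2 ≤ d
  lt_two_thirds : d < 2 / 3
  mass_eq : mass Z = ζ
  mass_le : ζ ≤ 42 / 100 * d
  two_mul_abs_le : 2 * |s| ≤ ζ
  cut_le : 16 / 81 * d ^ 2 ≤ m + (ζ * d / 4 - s * κ)
  heavy_le : m ≤ (d - ζ) ^ 2 / 4 - (κ - s) ^ 2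
  heavy_le_sub : ∀ z ∈ Z, m ≤ (d - ζ) ^ 2 / 4 - (κ - s) ^ 2 - X z * Y z
  nonneg : ∀ z ∈ Z, 0 ≤ X z
  le : ∀ z ∈ Z, X z ≤ Y z
  le_bound : ∀ z ∈ Z, Y z ≤ H z
  abs_bound_sub_le : ∀ z ∈ Z, |H z - d / 4| ≤ |κ| / 2
  integral_bound : integral Z H = ζ * d / 4 - s * κ
  light_le : e ≤ ζ ^ 2 / 4
  lt_of_test : (d - ζ) / 18 <
    (1 - d - ζ) * m + (1 / 2 - ζ) * (integral Z X + integral Z Y) + (d - ζ) * e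
  lt_of_balanced : 4 * |κ| ≤ 1 - d →
    m + integral Z Y - 11 / 10 * integral Z X - 11 / 10 * e < d / 2 - 2 / 9

/-- The linear function of the degrees `x ≤ y` of a light vertex whose integral over the light
vertices is bounded from below by the two density estimates in `LightProfile`. -/
noncomputable def weight (d ζ x y : ℝ) : ℝ :=
  (8 / 5 - 11 / 10 * d) * x + (d - 1 / 2) * y + (11 / 10 - d / 10) * ζ / 4 - (d / 2 - 5 / 18)

/-- The amount by which the degrees `x` and `y` of a light vertex into the heavy parts fall short of
half the total mass of these parts, scaled by the factor `1 / 2 - ζ` from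
`LightProfile.lt_of_test`. -/
noncomputable def gap (d ζ x y : ℝ) : ℝ := (1 / 2 - ζ) * ((d - ζ) / 2 - (x + y))

namespace LightProfile

variable {Z : Finset V} {X Y H : V → ℝ} {d ζ κ s m e w : ℝ}

theorem mass_nonneg (h : LightProfile Z X Y H d ζ κ s m e) : 0 ≤ ζ :=
  h.mass_eq ▸ SparseHalf.mass_nonneg Z

theorem sq_add_le (h : LightProfile Z X Y H d ζ κ s m e)
    (hw : m ≤ (d - ζ) ^ 2 / 4 - (κ - s) ^ 2 - w) :
    κ ^ 2 - κ * s + s ^ 2 + ζ * (d - ζ) / 4 + w ≤ 17 / 324 * d ^ 2 := by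
  linarith [h.cut_le]

theorem three_quarters_mul_sq_add_le (h : LightProfile Z X Y H d ζ κ s m e)
    (hw : m ≤ (d - ζ) ^ 2 / 4 - (κ - s) ^ 2 - w) :
    3 / 4 * κ ^ 2 + ζ * (d - ζ) / 4 + w ≤ 17 / 324 * d ^ 2 := by
  linarith [h.sq_add_le hw, sq_nonneg (κ / 2 - s)]

theorem ten_mul_le (h : LightProfile Z X Y H d ζ κ s m e) : 10 * ζ ≤ 3 * d := by
  have hd := h.half_le
  have hM := h.three_quarters_mul_sq_add_le (w := 0) (by linarith [h.heavy_le])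
  by_contra! hlt
  have := mul_nonneg (sub_nonneg.2 hlt.le) (sub_nonneg.2 h.mass_le)
  have : 0 < d * d := by positivity
  nlinarith [sq_nonneg κ]

theorem abs_imbalance_le (h : LightProfile Z X Y H d ζ κ s m e) : |κ| ≤ 3 / 10 * d := by
  have hd := h.half_le
  have hM := h.three_quarters_mul_sq_add_le (w := 0) (by linarith [h.heavy_le])
  have : 0 ≤ ζ * (d - ζ) := mul_nonneg h.mass_nonneg (by linarith [h.mass_le])
  have : 0 ≤ d * d := by positivity
  exact abs_le_of_sq_le_sq (by linarith) (by linarith)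

theorem sub_le_bound (h : LightProfile Z X Y H d ζ κ s m e) {z : V} (hz : z ∈ Z) :
    d / 4 - |κ| / 2 ≤ H z := by
  linarith [(abs_le.1 (h.abs_bound_sub_le z hz)).1]

theorem bound_le_add (h : LightProfile Z X Y H d ζ κ s m e) {z : V} (hz : z ∈ Z) :
    H z ≤ d / 4 + |κ| / 2 := by
  linarith [(abs_le.1 (h.abs_bound_sub_le z hz)).2]

theorem heavy_le_of_excess (h : LightProfile Z X Y H d ζ κ s m e) {z : V} (hz : z ∈ Z)
    (hpos : 0 ≤ X z + Y z - H z) :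
    m ≤ (d - ζ) ^ 2 / 4 - (κ - s) ^ 2 - (d / 4 - |κ| / 2) * (X z + Y z - H z) := by
  have hprod := mul_nonneg (sub_nonneg.2 ((h.le z hz).trans (h.le_bound z hz)))
    (sub_nonneg.2 (h.le_bound z hz))
  linarith [h.heavy_le_sub z hz, mul_le_mul_of_nonneg_right (h.sub_le_bound hz) hpos]

theorem exists_excess (h : LightProfile Z X Y H d ζ κ s m e) :
    ∃ δ ∈ Set.Icc (0 : ℝ) (3 / 10), (∀ z ∈ Z, X z + Y z ≤ H z + δ) ∧
      m ≤ (d - ζ) ^ 2 / 4 - (κ - s) ^ 2 - (d / 4 - |κ| / 2) * δ := by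
  by_cases hle : ∀ z ∈ Z, X z + Y z ≤ H z
  · exact ⟨0, by norm_num, by simpa using hle, by linarith [h.heavy_le]⟩
  · push Not at hle
    obtain ⟨z₀, hz₀, hlt⟩ := hle
    obtain ⟨z, hz, hmax⟩ := Z.exists_max_image (fun z ↦ X z + Y z - H z) ⟨z₀, hz₀⟩
    have hpos : 0 ≤ X z + Y z - H z := by linarith [hmax z₀ hz₀]
    refine ⟨X z + Y z - H z, ⟨hpos, ?_⟩, fun x hx ↦ by linarith [hmax x hx],
      h.heavy_le_of_excess hz hpos⟩
    linarith [h.le z hz, h.le_bound z hz, h.bound_le_add hz, h.abs_imbalance_le, h.lt_two_thirds]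

theorem integral_add_le (h : LightProfile Z X Y H d ζ κ s m e) {δ : ℝ}
    (hδ : ∀ z ∈ Z, X z + Y z ≤ H z + δ) :
    integral Z X + integral Z Y ≤ ζ * d / 4 - s * κ + ζ * δ := by
  rw [← integral_add, ← h.integral_bound, ← h.mass_eq, ← integral_const, ← integral_add]
  exact integral_mono hδ

theorem lt_integral_add (h : LightProfile Z X Y H d ζ κ s m e)
    (hw : m ≤ (d - ζ) ^ 2 / 4 - (κ - s) ^ 2 - w) :
    (d - ζ) / 4 * (ζ - 2 * ζ ^ 2) + (1 - d - ζ) * (w + (κ - s) ^ 2) <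
      (d - ζ) * (d * (1 - d) - 2 / 9) / 4 + (1 / 2 - ζ) * (integral Z X + integral Z Y) := by
  have hd := h.lt_two_thirds
  have hζ := h.ten_mul_le
  have hd' := h.half_le
  linarith [mul_le_mul_of_nonneg_left hw (show 0 ≤ 1 - d - ζ by linarith), h.lt_of_test,
    mul_le_mul_of_nonneg_left h.light_le (show 0 ≤ d - ζ by linarith)]

theorem mass_le_and_imbalance_le (h : LightProfile Z X Y H d ζ κ s m e) :
    ζ ≤ 61 / 20 * (d * (1 - d) - 2 / 9) ∧ 4 * |κ| ≤ 1 - d := by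
  obtain ⟨δ, ⟨hδ₀, hδ₁⟩, hδ, hm⟩ := h.exists_excess
  have hd := h.half_le
  have hd' := h.lt_two_thirds
  have hζ := h.ten_mul_le
  refine light_le_and_imbalance_le hd hd'.le h.mass_nonneg hζ
    (by linarith [h.abs_imbalance_le]) hδ₀ hδ₁ (h.sq_add_le hm) ?_
  linarith [h.lt_integral_add hm,
    mul_le_mul_of_nonneg_left (h.integral_add_le hδ) (show 0 ≤ 1 / 2 - ζ by linarith)]

theorem lt_integral_weight (h : LightProfile Z X Y H d ζ κ s m e) :
    1 / 2 * (2 / 3 - d) ^ 2 < integral Z fun z ↦ weight d ζ (X z) (Y z) := by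
  have hζ₀ := h.mass_nonneg
  have hζ := h.ten_mul_le
  have hd := h.lt_two_thirds
  have hd' := h.half_le
  have hbal := mul_le_mul_of_nonneg_left (h.lt_of_balanced h.mass_le_and_imbalance_le.2).le
    (show 0 ≤ 1 - d - ζ by linarith)
  have he := mul_le_mul_of_nonneg_left h.light_le
    (show 0 ≤ 11 / 10 - d / 10 - 21 / 10 * ζ by linarith)
  have hX := mul_nonneg hζ₀ (integral_nonneg h.nonneg)
  simp only [weight, integral_sub, integral_add, integral_const_mul, integral_const, h.mass_eq]
  linarith [h.lt_of_test, mul_nonneg hζ₀ (sq_nonneg ζ)]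

theorem add_lt (h : LightProfile Z X Y H d ζ κ s m e) {z : V} (hz : z ∈ Z) :
    X z + Y z < (d - ζ) / 2 := by
  have hY := (h.le_bound z hz).trans (h.bound_le_add hz)
  refine add_lt_of_sq_add_mul_le h.half_le h.mass_nonneg h.ten_mul_le (abs_nonneg κ)
    ((h.le z hz).trans hY) hY ?_
  rw [sq_abs]
  exact h.three_quarters_mul_sq_add_le (h.heavy_le_sub z hz)

theorem gap_pos (h : LightProfile Z X Y H d ζ κ s m e) {z : V} (hz : z ∈ Z) :
    0 < gap d ζ (X z) (Y z) :=
  mul_pos (by linarith [h.ten_mul_le, h.lt_two_thirds]) (by linarith [h.add_lt hz])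

theorem integral_gap_lt (h : LightProfile Z X Y H d ζ κ s m e) {z : V} (hz : z ∈ Z) :
    (integral Z fun z ↦ gap d ζ (X z) (Y z)) <
      (d - ζ) * (d * (1 - d) - 2 / 9) / 4 - (1 - d - ζ) * (X z * Y z + |κ - s| ^ 2) := by
  simp only [gap, integral_const_mul, integral_sub, integral_add, integral_const, h.mass_eq]
  rw [sq_abs]
  linarith [h.lt_integral_add (h.heavy_le_sub z hz)]

theorem integral_gap_mul_weight_le (h : LightProfile Z X Y H d ζ κ s m e) {z : V} (hz : z ∈ Z) :
    (integral Z fun z ↦ gap d ζ (X z) (Y z)) * weight d ζ (X z) (Y z) ≤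
      1 / 2 * (2 / 3 - d) ^ 2 * gap d ζ (X z) (Y z) := by
  have hgap := h.gap_pos hz
  have hint : 0 ≤ integral Z fun z ↦ gap d ζ (X z) (Y z) :=
    integral_nonneg fun z hz ↦ (h.gap_pos hz).le
  rcases le_total (weight d ζ (X z) (Y z)) 0 with hL | hL
  · exact (mul_nonpos_of_nonneg_of_nonpos hint hL).trans (by positivity)
  · have hκ : |κ| ≤ |κ - s| + ζ / 2 := by
      linarith [abs_sub_abs_le_abs_sub κ s, h.two_mul_abs_le]
    have hlt := h.integral_gap_lt hz
    calc _ ≤ weight d ζ (X z) (Y z) * ((d - ζ) * (d * (1 - d) - 2 / 9) / 4 -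
            (1 - d - ζ) * (X z * Y z + |κ - s| ^ 2)) := by
          rw [mul_comm]; exact mul_le_mul_of_nonneg_left hlt.le hL
      _ ≤ _ := (weight_mul_slack_lt h.half_le h.lt_two_thirds.le h.mass_nonneg
          h.mass_le_and_imbalance_le.1 (h.nonneg z hz) (h.le z hz)
          (by linarith [h.le_bound z hz, h.bound_le_add hz]) (h.add_lt hz).le rfl hL rfl
          (hint.trans hlt.le)).le

/-- Each light vertex has `weight` at most `(2 / 3 - d) ^ 2 / 2` times its share of the total `gap`,
whereas the total `weight` exceeds `(2 / 3 - d) ^ 2 / 2`. -/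
theorem elim (h : LightProfile Z X Y H d ζ κ s m e) : False := by
  have hweight := h.lt_integral_weight
  rcases Z.eq_empty_or_nonempty with rfl | hZ
  · simp only [integral, Finset.sum_empty, zero_div] at hweight
    linarith [sq_nonneg (2 / 3 - d)]
  · have hgap := integral_pos hZ fun z hz ↦ h.gap_pos hz
    have hle := integral_mono fun z hz ↦ h.integral_gap_mul_weight_le hz
    rw [integral_const_mul, integral_const_mul, mul_comm] at hle
    exact hweight.not_ge (le_of_mul_le_mul_right hle hgap)

end LightProfile

end LightProfile

section MaxCut

variable {V : Type*} [Fintype V] {G : SimpleGraph V} [DecidableRel G.Adj] {N P R : Finset V}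

/-- `P` and `R` partition `N`, and no partition of `N` into two parts has more edges between
them. -/
structure IsMaxCut (G : SimpleGraph V) [DecidableRel G.Adj] [DecidableEq V]
    (N P R : Finset V) : Prop where
  disjoint : Disjoint P R
  union_eq : P ∪ R = N
  edgeMass_le : ∀ {P' R' : Finset V}, Disjoint P' R' → P' ∪ R' = N →
    edgeMass G P' R' ≤ edgeMass G P R

/-- The vertices of `P` with more than half of `R` as neighbours. -/
noncomputable def heavy (G : SimpleGraph V) [DecidableRel G.Adj] (P R : Finset V) : Finset V :=
  P.filter fun x ↦ ¬2 * relDegree G x R ≤ mass R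

/-- The vertices of `P` with at most half of `R` as neighbours. -/
noncomputable def light (G : SimpleGraph V) [DecidableRel G.Adj] (P R : Finset V) : Finset V :=
  P.filter fun x ↦ 2 * relDegree G x R ≤ mass R

theorem heavy_subset (P R : Finset V) : heavy G P R ⊆ P := Finset.filter_subset _ _

theorem light_subset (P R : Finset V) : light G P R ⊆ P := Finset.filter_subset _ _

theorem disjoint_heavy_light (P R : Finset V) : Disjoint (heavy G P R) (light G P R) :=
  (Finset.disjoint_filter_filter_not _ _ _).symm

theorem relDegree_le_of_mem_light {x : V} (hx : x ∈ light G P R) :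
    relDegree G x R ≤ mass R / 2 := by
  linarith [(Finset.mem_filter.1 hx).2]

theorem edgeMass_light_le (P R : Finset V) :
    edgeMass G (light G P R) R ≤ mass (light G P R) * (mass R / 2) :=
  integral_le_mass_mul fun _ hx ↦ relDegree_le_of_mem_light hx

theorem edgeMass_heavy_self (hN₃ : G.CliqueFreeOn ↑N 3) (hP : P ⊆ N) (hR : R ⊆ N) :
    edgeMass G (heavy G P R) (heavy G P R) = 0 := by
  refine edgeMass_eq_zero fun x hx y hy hxy ↦ ?_
  rw [heavy, Finset.mem_filter, not_le] at hx hy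
  linarith [relDegree_add_relDegree_le hN₃ (hP hx.1) (hP hy.1) hxy (Finset.coe_subset.2 hR)]

theorem heavy_union_light [DecidableEq V] (P R : Finset V) : heavy G P R ∪ light G P R = P := by
  rw [Finset.union_comm, heavy, light, Finset.filter_union_filter_not_eq]

theorem mass_heavy_add_mass_light (P R : Finset V) :
    mass (heavy G P R) + mass (light G P R) = mass P := by
  classical
  rw [← mass_union (disjoint_heavy_light P R), heavy_union_light]

theorem edgeMass_heavy_add_edgeMass_light (P R T : Finset V) :
    edgeMass G (heavy G P R) T + edgeMass G (light G P R) T = edgeMass G P T := by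
  classical
  rw [← edgeMass_union_left G (disjoint_heavy_light P R), heavy_union_light]

theorem edgeMass_le_mul_sub_light (P R : Finset V) :
    edgeMass G P R ≤ mass P * mass R - mass (light G P R) * mass R / 2 := by
  have hheavy := edgeMass_le_mul G (heavy G P R) R
  rw [eq_sub_of_add_eq (mass_heavy_add_mass_light (G := G) P R)] at hheavy
  linarith [edgeMass_light_le (G := G) P R, edgeMass_heavy_add_edgeMass_light (G := G) P R R]

theorem edgeMass_le_edgeMass_heavy_add (P R : Finset V) :
    edgeMass G P R ≤ edgeMass G (heavy G P R) (heavy G R P) +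
      mass (light G P R) * mass R / 2 + mass (light G R P) * mass P / 2 := by
  have hmono := edgeMass_mono_left G (heavy_subset (G := G) P R) (light G R P)
  rw [edgeMass_comm G P] at hmono
  have hsplit := edgeMass_heavy_add_edgeMass_light (G := G) R P (heavy G P R)
  rw [edgeMass_comm G (heavy G R P), edgeMass_comm G (light G R P), edgeMass_comm G R] at hsplit
  linarith [edgeMass_light_le (G := G) P R, edgeMass_light_le (G := G) R P,
    edgeMass_heavy_add_edgeMass_light (G := G) P R R]

variable [DecidableEq V]

theorem exists_isMaxCut (N : Finset V) : ∃ P R, IsMaxCut G N P R := by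
  obtain ⟨P, hP, hmax⟩ :=
    N.powerset.exists_max_image (fun P ↦ edgeMass G P (N \ P)) N.powerset_nonempty
  refine ⟨P, N \ P, Finset.disjoint_sdiff,
    Finset.union_sdiff_of_subset (Finset.mem_powerset.1 hP), ?_⟩
  rintro P' R' hdisj rfl
  simpa [Finset.union_sdiff_cancel_left hdisj] using
    hmax P' (Finset.mem_powerset.2 Finset.subset_union_left)

namespace IsMaxCut

theorem symm (h : IsMaxCut G N P R) : IsMaxCut G N R P where
  disjoint := h.disjoint.symm
  union_eq := by rw [Finset.union_comm, h.union_eq]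
  edgeMass_le {P' R'} hdisj hunion := by
    rw [edgeMass_comm G P', edgeMass_comm G R]
    exact h.edgeMass_le hdisj.symm (by rw [Finset.union_comm, hunion])

theorem left_subset (h : IsMaxCut G N P R) : P ⊆ N := h.union_eq ▸ Finset.subset_union_left

theorem right_subset (h : IsMaxCut G N P R) : R ⊆ N := h.symm.left_subset

theorem mass_add (h : IsMaxCut G N P R) : mass P + mass R = mass N := by
  rw [← mass_union h.disjoint, h.union_eq]

theorem edgeMass_self_eq (h : IsMaxCut G N P R) :
    edgeMass G N N = edgeMass G P P + edgeMass G R R + 2 * edgeMass G P R := by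
  rw [← h.union_eq, edgeMass_union_self G h.disjoint]

theorem relDegree_le (h : IsMaxCut G N P R) {x : V} (hx : x ∈ P) :
    relDegree G x P ≤ relDegree G x R := by
  have hxP : {x} ⊆ P := Finset.singleton_subset_iff.2 hx
  have hxR : Disjoint R {x} :=
    Finset.disjoint_singleton_right.2 (Finset.disjoint_left.1 h.disjoint hx)
  have hdisj : Disjoint (P \ {x}) (R ∪ {x}) := Finset.disjoint_union_right.2
    ⟨h.disjoint.mono_left Finset.sdiff_subset, Finset.sdiff_disjoint⟩
  have hmove := h.edgeMass_le hdisj (by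
    rw [Finset.union_left_comm, Finset.sdiff_union_of_subset hxP, Finset.union_comm, h.union_eq])
  have hPR := edgeMass_union_left G (Finset.sdiff_disjoint (s := {x}) (t := P)) R
  have hP := edgeMass_union_left G (Finset.sdiff_disjoint (s := {x}) (t := P)) {x}
  rw [Finset.sdiff_union_of_subset hxP] at hPR hP
  rw [edgeMass_union_right G hxR, hPR] at hmove
  have hxx : edgeMass G {x} {x} = 0 := edgeMass_eq_zero (by simp)
  have hle : edgeMass G {x} P ≤ edgeMass G {x} R := by
    rw [edgeMass_comm G _ P]
    linarith
  have : Nonempty V := ⟨x⟩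
  rwa [edgeMass, edgeMass, integral, integral, Finset.sum_singleton, Finset.sum_singleton,
    div_le_div_iff_of_pos_right (mod_cast Fintype.card_pos)] at hle

theorem relDegree_le_of_mem_light (h : IsMaxCut G N P R) {x : V} (hx : x ∈ light G P R) :
    relDegree G x P ≤ mass R / 2 :=
  (h.relDegree_le (light_subset P R hx)).trans (SparseHalf.relDegree_le_of_mem_light hx)

theorem sq_edgeMass_self_le (h : IsMaxCut G N P R) (hN₃ : G.CliqueFreeOn ↑N 3)
    (hN : N.Nonempty) : edgeMass G N N ^ 2 ≤ mass N ^ 2 * edgeMass G P R := by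
  obtain ⟨S, hS, -, hsq⟩ := exists_edgeMass_self_eq_zero_and_sq_le hN₃ hN
  exact hsq.trans (mul_le_mul_of_nonneg_left
    (h.edgeMass_le Finset.disjoint_sdiff (Finset.union_sdiff_of_subset hS)) (sq_nonneg _))

/-- Compare with the cut that adds each vertex of `Z` to the part of `A ∪ B` in which it has fewer
neighbours. -/
theorem half_add_le (h : IsMaxCut G N P R) {A B Z : Finset V} (hA : edgeMass G A A = 0)
    (hB : edgeMass G B B = 0) (hAB : Disjoint A B) (hABZ : Disjoint (A ∪ B) Z)
    (hN : A ∪ B ∪ Z = N) :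
    (edgeMass G P P + edgeMass G R R) / 2 ≤
      integral Z (fun z ↦ min (relDegree G z A) (relDegree G z B)) + edgeMass G Z Z / 2 := by
  set Z₁ := Z.filter fun z ↦ relDegree G z A ≤ relDegree G z B
  set Z₂ := Z.filter fun z ↦ ¬relDegree G z A ≤ relDegree G z B
  have hZ₁₂ : Disjoint Z₁ Z₂ := Finset.disjoint_filter_filter_not _ _ _
  have hZ : Z₁ ∪ Z₂ = Z := Finset.filter_union_filter_not_eq _ _
  have hZ₁ : Disjoint (A ∪ B) Z₁ := hABZ.mono_right (Finset.filter_subset _ _)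
  have hZ₂ : Disjoint (A ∪ B) Z₂ := hABZ.mono_right (Finset.filter_subset _ _)
  rw [Finset.disjoint_union_left] at hZ₁ hZ₂
  have hdisj : Disjoint (A ∪ Z₁) (B ∪ Z₂) := by
    simp only [Finset.disjoint_union_left, Finset.disjoint_union_right]
    exact ⟨⟨hAB, hZ₁.2.symm⟩, hZ₂.1, hZ₁₂⟩
  have hunion : A ∪ Z₁ ∪ (B ∪ Z₂) = N := by rw [Finset.union_union_union_comm, hZ, hN]
  have hmax := h.edgeMass_le hdisj hunion
  have hcut := edgeMass_union_self G hdisj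
  rw [hunion, edgeMass_union_self G hZ₁.1, edgeMass_union_self G hZ₂.2, hA, hB] at hcut
  have hself := edgeMass_union_self G hZ₁₂
  rw [hZ] at hself
  have hAZ : edgeMass G A Z₁ =
      integral Z₁ fun z ↦ min (relDegree G z A) (relDegree G z B) := by
    rw [edgeMass_comm]
    exact integral_congr fun z hz ↦ (min_eq_left (Finset.mem_filter.1 hz).2).symm
  have hBZ : edgeMass G B Z₂ =
      integral Z₂ fun z ↦ min (relDegree G z A) (relDegree G z B) := by
    rw [edgeMass_comm]
    exact integral_congr fun z hz ↦
      (min_eq_right (not_le.1 (Finset.mem_filter.1 hz).2).le).symm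
  have hmin := integral_union hZ₁₂ fun z ↦ min (relDegree G z A) (relDegree G z B)
  rw [hZ] at hmin
  linarith [h.edgeMass_self_eq, edgeMass_nonneg G Z₁ Z₂]

end IsMaxCut

end MaxCut

section Tripartition

variable {V : Type*} [Fintype V] {G : SimpleGraph V} [DecidableRel G.Adj]

theorem edgeMass_self_eq_of_tripartition [DecidableEq V] {A B Z : Finset V}
    (hA : edgeMass G A A = 0) (hB : edgeMass G B B = 0) (hAB : Disjoint A B)
    (hABZ : Disjoint (A ∪ B) Z) :
    edgeMass G (A ∪ B ∪ Z) (A ∪ B ∪ Z) =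
      2 * edgeMass G A B + 2 * (edgeMass G Z A + edgeMass G Z B) + edgeMass G Z Z := by
  rw [edgeMass_union_self G hABZ, edgeMass_union_self G hAB, hA, hB, edgeMass_comm G (A ∪ B),
    edgeMass_union_right G hAB]
  ring

/-- Test the set `Z ∪ A`, topped up with a part of `B`. -/
theorem Dense.mass_div_lt (h : Dense G) {A B Z : Finset V} (hA : edgeMass G A A = 0)
    (hB : edgeMass G B B = 0) (hAB : Disjoint A B) (hAZ : Disjoint A Z) (hBZ : Disjoint B Z)
    (hZA : mass Z + mass A < 1 / 2) (hsum : 1 / 2 ≤ mass Z + mass A + mass B) :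
    mass B / 9 < mass B * (edgeMass G Z Z + 2 * edgeMass G Z A) +
      2 * (1 / 2 - mass Z - mass A) * (edgeMass G Z B + edgeMass G A B) := by
  classical
  have hmass := mass_union hAZ.symm
  obtain ⟨l, -, hl, hlt⟩ := h.exists_mul_mass_eq_and_lt (A := Z ∪ A) (B := B)
    (Finset.disjoint_union_left.2 ⟨hBZ.symm, hAB⟩) (by linarith) (by linarith)
  rw [edgeMass_union_self G hAZ.symm, edgeMass_union_left G hAZ.symm, hA, hB] at hlt
  rw [sub_sub, ← hmass, ← hl]
  linarith [mul_lt_mul_of_pos_left hlt (show 0 < mass B by linarith)]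

theorem Dense.lt_of_tripartition [DecidableEq V] (h : Dense G) {A B Z : Finset V}
    (hA : edgeMass G A A = 0) (hB : edgeMass G B B = 0) (hAB : Disjoint A B)
    (hABZ : Disjoint (A ∪ B) Z)
    (hZA : mass Z + mass A < 1 / 2) (hZB : mass Z + mass B < 1 / 2)
    (hsum : 1 / 2 ≤ mass Z + mass A + mass B) :
    (mass A + mass B) / 18 < (1 - (mass A + mass B) - 2 * mass Z) * edgeMass G A B +
      (1 / 2 - mass Z) * (edgeMass G Z A + edgeMass G Z B) +
      (mass A + mass B) * (edgeMass G Z Z / 2) := by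
  rw [Finset.disjoint_union_left] at hABZ
  have htestA := h.mass_div_lt hA hB hAB hABZ.1 hABZ.2 hZA hsum
  have htestB := h.mass_div_lt hB hA hAB.symm hABZ.2 hABZ.1 hZB (by linarith)
  rw [edgeMass_comm G B A] at htestB
  linarith

end Tripartition

section LightVertices

variable {V : Type*} [Fintype V] {G : SimpleGraph V} [DecidableRel G.Adj] {N P R : Finset V}

theorem integral_min_add_integral_max (A B Z : Finset V) :
    integral Z (fun z ↦ min (relDegree G z A) (relDegree G z B)) +
      integral Z (fun z ↦ max (relDegree G z A) (relDegree G z B)) =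
      edgeMass G Z A + edgeMass G Z B := by
  rw [← integral_add, edgeMass, edgeMass, ← integral_add]
  exact integral_congr fun z _ ↦ min_add_max _ _

variable [DecidableEq V]

/-- The light vertices of both parts of the cut `P ∪ R`. -/
noncomputable def lightVertices (G : SimpleGraph V) [DecidableRel G.Adj] (P R : Finset V) :
    Finset V :=
  light G P R ∪ light G R P

namespace IsMaxCut

theorem disjoint_light (h : IsMaxCut G N P R) : Disjoint (light G P R) (light G R P) :=
  h.disjoint.mono (light_subset P R) (light_subset R P)

theorem mass_lightVertices (h : IsMaxCut G N P R) :
    mass (lightVertices G P R) = mass (light G P R) + mass (light G R P) :=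
  mass_union h.disjoint_light

theorem disjoint_heavy (h : IsMaxCut G N P R) : Disjoint (heavy G P R) (heavy G R P) :=
  h.disjoint.mono (heavy_subset P R) (heavy_subset R P)

theorem disjoint_heavy_lightVertices (h : IsMaxCut G N P R) :
    Disjoint (heavy G P R ∪ heavy G R P) (lightVertices G P R) := by
  simp only [lightVertices, Finset.disjoint_union_left, Finset.disjoint_union_right]
  exact ⟨⟨disjoint_heavy_light P R, h.disjoint.symm.mono (heavy_subset R P) (light_subset P R)⟩,
    h.disjoint.mono (heavy_subset P R) (light_subset R P), disjoint_heavy_light R P⟩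

theorem heavy_union_lightVertices (h : IsMaxCut G N P R) :
    heavy G P R ∪ heavy G R P ∪ lightVertices G P R = N := by
  rw [lightVertices, Finset.union_union_union_comm, heavy_union_light, heavy_union_light,
    h.union_eq]

theorem lightVertices_subset (h : IsMaxCut G N P R) : lightVertices G P R ⊆ N :=
  Finset.union_subset ((light_subset P R).trans h.left_subset)
    ((light_subset R P).trans h.right_subset)

theorem max_relDegree_heavy_le (h : IsMaxCut G N P R) {z : V} (hz : z ∈ light G P R) :
    max (relDegree G z (heavy G P R)) (relDegree G z (heavy G R P)) ≤ mass R / 2 :=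
  max_le ((relDegree_mono G z (heavy_subset P R)).trans (h.relDegree_le_of_mem_light hz))
    ((relDegree_mono G z (heavy_subset R P)).trans (SparseHalf.relDegree_le_of_mem_light hz))

/-- `d ^ 2 * t ≥ x ^ 2` linearised at `x = 4 / 9 * d ^ 2`. -/
theorem mul_edgeMass_self_sub_le (h : IsMaxCut G N P R) (hN₃ : G.CliqueFreeOn ↑N 3)
    (hN : N.Nonempty) :
    8 / 9 * edgeMass G N N - 16 / 81 * mass N ^ 2 ≤ edgeMass G P R := by
  have hpos : 0 < mass N ^ 2 := pow_pos (mass_pos.2 hN) 2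
  refine le_of_mul_le_mul_left ?_ hpos
  linarith [h.sq_edgeMass_self_le hN₃ hN, sq_nonneg (edgeMass G N N - 4 / 9 * mass N ^ 2)]

theorem mul_sq_mass_le_edgeMass (h : IsMaxCut G N P R) (hG : Dense G)
    (hN₃ : G.CliqueFreeOn ↑N 3) (hN : 1 / 2 ≤ mass N) :
    16 / 81 * mass N ^ 2 ≤ edgeMass G P R := by
  linarith [h.mul_edgeMass_self_sub_le hN₃ (mass_pos.1 (by linarith)),
    hG.mul_sq_mass_lt_edgeMass hN]

theorem mass_add_mass_light_le (h : IsMaxCut G N P R) (hG : Dense G)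
    (hN₃ : G.CliqueFreeOn ↑N 3) (hN : 1 / 2 ≤ mass N) :
    mass P + mass (light G R P) ≤ 3 / 4 * mass N := by
  have hlight := edgeMass_le_mul_sub_light (G := G) R P
  rw [edgeMass_comm, mul_comm (mass R)] at hlight
  exact add_le_three_quarters_mul_of_cut_le (by linarith) (mass_nonneg P) h.mass_add
    (h.mul_sq_mass_le_edgeMass hG hN₃ hN) hlight

theorem mass_lightVertices_le (h : IsMaxCut G N P R) (hG : Dense G)
    (hN₃ : G.CliqueFreeOn ↑N 3) (hN : 1 / 2 ≤ mass N) :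
    mass (lightVertices G P R) ≤ 42 / 100 * mass N := by
  have hlight := edgeMass_le_mul_sub_light (G := G) R P
  rw [edgeMass_comm, mul_comm (mass R)] at hlight
  rw [h.mass_lightVertices]
  exact add_le_of_cut_le (by linarith) (mass_nonneg P) (mass_nonneg R) h.mass_add
    (mass_nonneg _) (h.mul_sq_mass_le_edgeMass hG hN₃ hN) (edgeMass_le_mul_sub_light P R) hlight

theorem lt_of_test (h : IsMaxCut G N P R) (hG : Dense G) (hN₃ : G.CliqueFreeOn ↑N 3)
    (hN : 1 / 2 ≤ mass N) (hN' : mass N < 2 / 3) :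
    (mass N - mass (lightVertices G P R)) / 18 <
      (1 - mass N - mass (lightVertices G P R)) * edgeMass G (heavy G P R) (heavy G R P) +
      (1 / 2 - mass (lightVertices G P R)) * (edgeMass G (lightVertices G P R) (heavy G P R) +
        edgeMass G (lightVertices G P R) (heavy G R P)) +
      (mass N - mass (lightVertices G P R)) *
        (edgeMass G (lightVertices G P R) (lightVertices G P R) / 2) := by
  have hP := mass_heavy_add_mass_light (G := G) P R
  have hR := mass_heavy_add_mass_light (G := G) R P
  have hPle := h.mass_add_mass_light_le hG hN₃ hN
  have hRle := h.symm.mass_add_mass_light_le hG hN₃ hN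
  have hlight := h.mass_lightVertices
  have hsum := h.mass_add
  have := hG.lt_of_tripartition (edgeMass_heavy_self hN₃ h.left_subset h.right_subset)
    (edgeMass_heavy_self hN₃ h.right_subset h.left_subset) h.disjoint_heavy
    h.disjoint_heavy_lightVertices (by linarith) (by linarith) (by linarith)
  rw [show mass (heavy G P R) + mass (heavy G R P) = mass N - mass (lightVertices G P R) by
    linarith] at this
  linarith

theorem half_internal_le (h : IsMaxCut G N P R) (hG : Dense G) (hN₃ : G.CliqueFreeOn ↑N 3)
    (hN : 1 / 2 ≤ mass N) (hN' : mass N < 2 / 3) :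
    (edgeMass G P P + edgeMass G R R) / 2 ≤ 1 / 90 := by
  have hsq : mass N ^ 2 ≤ (2 / 3) ^ 2 := by gcongr
  linarith [h.edgeMass_self_eq, hG.mul_sq_mass_lt_edgeMass hN,
    h.mul_edgeMass_self_sub_le hN₃ (mass_pos.1 (by linarith))]

theorem lt_of_balanced [Nonempty V] (h : IsMaxCut G N P R) (hG : Dense G)
    (hN₃ : G.CliqueFreeOn ↑N 3) (hdeg : ∀ x, relDegree G x Finset.univ ≤ mass N)
    (hN : 1 / 2 ≤ mass N) (hN' : mass N < 2 / 3) (hbal : 2 * |mass P - mass R| ≤ 1 - mass N) :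
    edgeMass G (heavy G P R) (heavy G R P) +
      integral (lightVertices G P R)
        (fun z ↦ max (relDegree G z (heavy G P R)) (relDegree G z (heavy G R P))) -
      11 / 10 * integral (lightVertices G P R)
        (fun z ↦ min (relDegree G z (heavy G P R)) (relDegree G z (heavy G R P))) -
      11 / 10 * (edgeMass G (lightVertices G P R) (lightVertices G P R) / 2) <
      mass N / 2 - 2 / 9 := by
  have hA := edgeMass_heavy_self hN₃ h.left_subset h.right_subset
  have hB := edgeMass_heavy_self hN₃ h.right_subset h.left_subset
  have hlt := hG.edgeMass_sub_lt hdeg h.disjoint h.mass_add (by linarith) hN'.le hbal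
  have hmaj := h.half_add_le hA hB h.disjoint_heavy h.disjoint_heavy_lightVertices
    h.heavy_union_lightVertices
  have htri := edgeMass_self_eq_of_tripartition hA hB h.disjoint_heavy
    h.disjoint_heavy_lightVertices
  rw [h.heavy_union_lightVertices, h.edgeMass_self_eq, ← integral_min_add_integral_max] at htri
  have hb := h.half_internal_le hG hN₃ hN hN'
  have hsq := mul_le_mul_of_nonneg_left hb
    (show 0 ≤ (edgeMass G P P + edgeMass G R R) / 2 by
      linarith [edgeMass_nonneg G P P, edgeMass_nonneg G R R])
  linarith

theorem mass_heavy_mul_mass_heavy (h : IsMaxCut G N P R) :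
    mass (heavy G P R) * mass (heavy G R P) =
      (mass N - mass (lightVertices G P R)) ^ 2 / 4 - ((mass P - mass R) / 2 -
        (mass (light G P R) - mass (light G R P)) / 2) ^ 2 := by
  rw [← h.mass_add, h.mass_lightVertices, ← mass_heavy_add_mass_light (G := G) P R,
    ← mass_heavy_add_mass_light (G := G) R P]
  ring

theorem integral_lightVertices_ite (h : IsMaxCut G N P R) :
    integral (lightVertices G P R) (fun z ↦ if z ∈ light G P R then mass R / 2 else mass P / 2) =
      mass (lightVertices G P R) * mass N / 4 -
        (mass (light G P R) - mass (light G R P)) / 2 * ((mass P - mass R) / 2) := by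
  rw [lightVertices, integral_union h.disjoint_light,
    integral_congr (S := light G P R) fun z hz ↦ if_pos hz,
    integral_congr (S := light G R P) fun z hz ↦
      if_neg (Finset.disjoint_right.1 h.disjoint_light hz),
    integral_const, integral_const, ← lightVertices, h.mass_lightVertices, ← h.mass_add]
  ring

theorem abs_ite_mem_light_sub_le (h : IsMaxCut G N P R) (z : V) :
    |(if z ∈ light G P R then mass R / 2 else mass P / 2) - mass N / 4| ≤
      |(mass P - mass R) / 2| / 2 := by
  rw [← h.mass_add]
  have hneg := neg_abs_le ((mass P - mass R) / 2)
  have hpos := le_abs_self ((mass P - mass R) / 2)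
  split_ifs <;> exact abs_le.2 ⟨by linarith, by linarith⟩

theorem max_relDegree_heavy_le_ite (h : IsMaxCut G N P R) {z : V}
    (hz : z ∈ lightVertices G P R) :
    max (relDegree G z (heavy G P R)) (relDegree G z (heavy G R P)) ≤
      if z ∈ light G P R then mass R / 2 else mass P / 2 := by
  split_ifs with hzP
  · exact h.max_relDegree_heavy_le hzP
  · rw [max_comm]
    exact h.symm.max_relDegree_heavy_le ((Finset.mem_union.1 hz).resolve_left hzP)

theorem lightProfile [Nonempty V] (h : IsMaxCut G N P R) (hG : Dense G)
    (hN₃ : G.CliqueFreeOn ↑N 3) (hdeg : ∀ x, relDegree G x Finset.univ ≤ mass N)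
    (hN : 1 / 2 ≤ mass N) (hN' : mass N < 2 / 3) :
    LightProfile (lightVertices G P R)
      (fun z ↦ min (relDegree G z (heavy G P R)) (relDegree G z (heavy G R P)))
      (fun z ↦ max (relDegree G z (heavy G P R)) (relDegree G z (heavy G R P)))
      (fun z ↦ if z ∈ light G P R then mass R / 2 else mass P / 2)
      (mass N) (mass (lightVertices G P R)) ((mass P - mass R) / 2)
      ((mass (light G P R) - mass (light G R P)) / 2)
      (edgeMass G (heavy G P R) (heavy G R P))
      (edgeMass G (lightVertices G P R) (lightVertices G P R) / 2) := by
  exact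
    { half_le := hN
      lt_two_thirds := hN'
      mass_eq := rfl
      mass_le := h.mass_lightVertices_le hG hN₃ hN
      two_mul_abs_le := by
        rw [h.mass_lightVertices, abs_div, abs_two, mul_div_cancel₀ _ two_ne_zero, abs_le]
        constructor <;> linarith [mass_nonneg (light G P R), mass_nonneg (light G R P)]
      cut_le := by
        rw [h.mass_lightVertices, ← h.mass_add]
        linarith [h.mass_add ▸ h.mul_sq_mass_le_edgeMass hG hN₃ hN,
          edgeMass_le_edgeMass_heavy_add (G := G) P R]
      heavy_le := h.mass_heavy_mul_mass_heavy ▸ edgeMass_le_mul G _ _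
      heavy_le_sub := fun z hz ↦ by
        rw [min_mul_max, ← h.mass_heavy_mul_mass_heavy]
        exact edgeMass_le_mul_sub_mul hN₃ (h.lightVertices_subset hz)
          (Finset.coe_subset.2 ((heavy_subset P R).trans h.left_subset))
          (Finset.coe_subset.2 ((heavy_subset R P).trans h.right_subset))
      nonneg := fun z _ ↦ le_min (relDegree_nonneg G z _) (relDegree_nonneg G z _)
      le := fun _ _ ↦ min_le_max
      le_bound := fun _ hz ↦ h.max_relDegree_heavy_le_ite hz
      abs_bound_sub_le := fun z _ ↦ h.abs_ite_mem_light_sub_le z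
      integral_bound := h.integral_lightVertices_ite
      light_le := by
        linarith [two_mul_edgeMass_self_le hN₃ (Finset.coe_subset.2 h.lightVertices_subset)]
      lt_of_test := by
        rw [integral_min_add_integral_max]
        exact h.lt_of_test hG hN₃ hN hN'
      lt_of_balanced := fun hbal ↦ h.lt_of_balanced hG hN₃ hdeg hN hN' <| by
        rw [abs_div, abs_two] at hbal
        linarith }

end IsMaxCut

end LightVertices

section Main

variable {V : Type*} [Fintype V] {G : SimpleGraph V} [DecidableRel G.Adj]

theorem Dense.not_half_le_mass [Nonempty V] (h : Dense G) {N : Finset V}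
    (hN₃ : G.CliqueFreeOn ↑N 3) (hdeg : ∀ x, relDegree G x Finset.univ ≤ mass N) :
    ¬1 / 2 ≤ mass N := fun hN ↦ by
  classical
  obtain ⟨P, R, hcut⟩ := exists_isMaxCut (G := G) N
  exact (hcut.lightProfile h hN₃ hdeg hN (h.mass_lt_two_thirds hN₃)).elim

theorem not_dense [Nonempty V] (hG : G.CliqueFree 4) : ¬Dense G := fun hdense ↦ by
  classical
  obtain ⟨v, -, hmax⟩ := Finset.univ.exists_max_image (relDegree G · Finset.univ)
    Finset.univ_nonempty
  set N := Finset.univ.filter (G.Adj v) with hN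
  have hN₃ : G.CliqueFreeOn ↑N 3 := by
    have := SimpleGraph.CliqueFreeOn.of_succ G (hG.cliqueFreeOn (s := Set.univ)) (Set.mem_univ v)
    simpa [hN, SimpleGraph.neighborSet] using this
  have hdeg (x) : relDegree G x Finset.univ ≤ mass N := by
    rw [← relDegree_eq_mass_filter]
    exact hmax x (Finset.mem_univ x)
  exact hdense.not_half_le_mass hN₃ hdeg (hdense.half_le_mass hN₃ hdeg)

/-- Scaling a fractional half down to integral weight `⌊|V| / 2⌋` before rounding it only lowers
the quadratic form. -/
theorem exists_card_eq_half_of_not_dense (hG : ¬Dense G) :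
    ∃ S : Finset V, S.card = Fintype.card V / 2 ∧
      ∑ x ∈ S, ∑ y ∈ S, G.adjMatrix ℝ x y ≤ (Fintype.card V : ℝ) ^ 2 / 9 := by
  classical
  unfold Dense at hG
  push Not at hG
  obtain ⟨f, hf, hsum, hform⟩ := hG
  set c : ℝ := (Fintype.card V / 2 : ℕ) / (Fintype.card V / 2)
  have hc : c ∈ Set.Icc 0 1 :=
    ⟨by positivity, div_le_one_of_le₀ Nat.cast_div_le (by positivity)⟩
  have hcsum : ∑ x, (c • f) x = (Fintype.card V / 2 : ℕ) := by
    simp only [Pi.smul_apply, smul_eq_mul, ← Finset.mul_sum, hsum]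
    exact div_mul_cancel_of_imp fun h ↦ by simp_all
  obtain ⟨S, hcard, hle⟩ := exists_card_eq_sum_sum_le (adjMatrix_nonneg G) (by simp)
    (fun x ↦ unitInterval.mul_mem hc (hf x)) hcsum
  refine ⟨S, hcard, hle.trans (le_trans ?_ hform)⟩
  change (c • f) ⬝ᵥ _ *ᵥ (c • f) ≤ _
  have hform₀ := dotProduct_mulVec_nonneg (adjMatrix_nonneg G) fun x ↦ (hf x).1
  rw [Matrix.mulVec_smul, smul_dotProduct, dotProduct_smul, smul_smul, smul_eq_mul]
  exact mul_le_of_le_one_left hform₀ (mul_le_one₀ hc.2 hc.1 hc.2)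

end Main

end SparseHalf

open Classical in
theorem k4free_sparse_half_general {V : Type*} [Fintype V] (G : SimpleGraph V)
    [DecidableRel G.Adj] (hG : G.CliqueFree 4) :
    ∃ S : Finset V, S.card = Fintype.card V / 2 ∧
      ((G.edgeFinset.filter (fun e => ∀ v ∈ e, v ∈ S)).card : ℝ) ≤
        (Fintype.card V : ℝ) ^ 2 / 18 := by
  rcases isEmpty_or_nonempty V with hV | hV
  · exact ⟨∅, by simp, by simp [Subsingleton.elim G ⊥]⟩
  obtain ⟨S, hcard, hle⟩ := SparseHalf.exists_card_eq_half_of_not_dense (SparseHalf.not_dense hG)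
  rw [← SparseHalf.two_mul_card_filter_edgeFinset] at hle
  exact ⟨S, hcard, by linarith⟩

open Classical in
/-- Every `K₄`-free graph on `n` vertices contains a set of `⌊n/2⌋` vertices
spanning at most `n² / 18` edges. -/
theorem k4free_sparse_half (n : ℕ) (G : SimpleGraph (Fin n))
    [DecidableRel G.Adj] (hG : G.CliqueFree 4) :
    ∃ S : Finset (Fin n), S.card = n / 2 ∧
      ((G.edgeFinset.filter (fun e => ∀ v ∈ e, v ∈ S)).card : ℝ) ≤ n ^ 2 / 18 := by
  convert k4free_sparse_half_general G hG <;> simp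
end
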